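/- arXiv:2605.13882 — 3 statements merged into one kernel-verified Lean document; each statement's English description precedes it below -/
import Mathlib

section
/- The integral R_C(0, 2) = ∫_0^∞ cos(2πx)/(exp(2π√x) − 1) dx converges and equals 1/16. -/
open MeasureTheory Real Set

/-!
Substituting `x = t²` and integrating by parts turns `∫ cos (ω x) / (exp (2 π √x) - 1)` into a
multiple of `∫ sin (ω t²) / sinh² (π t)`, the imaginary part of the integral over `(0, ∞)` of
`K t = (exp (i ω t²) - 1) / sinh² (π t)`.

For `ω = 2 π` there is a meromorphic `F` with `F z + F (-z) = K z` and `F (i - z) = -F z`, whose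
singularities in the strip `0 ≤ im z ≤ 1/2` are removable. Integrate `F` along the boundary of the
rectangle with vertices `±R`, `±R + i/2`: the bottom side contributes `∫_0^R K`, the top side
contributes nothing since `F` is odd about `i/2`, and on the vertical sides `F` tends to the
constants `±(i / (2 π) - (1 + i) / 4)`. Hence `∫_0^∞ K = 1 / (2 π) - 1/4 + i/4`.
-/

open Filter Topology Interval
open Complex (I)

section ContourIntegration

variable {E : Type*} [NormedAddCommGroup E]

theorem intervalIntegral_neg_self_eq [NormedSpace ℝ E] {f : ℝ → E} {R : ℝ}
    (hf : IntervalIntegrable f volume (-R) R) :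
    ∫ x in -R..R, f x = ∫ x in 0..R, (f x + f (-x)) := by
  have h0 : (0 : ℝ) ∈ [[-R, R]] := by
    rcases le_total 0 R with hR | hR
    · exact mem_uIcc.2 (.inl ⟨by linarith, hR⟩)
    · exact mem_uIcc.2 (.inr ⟨hR, by linarith⟩)
  have hleft : IntervalIntegrable f volume (-R) 0 :=
    hf.mono_set (uIcc_subset_uIcc_left h0)
  have hright : IntervalIntegrable f volume 0 R :=
    hf.mono_set (uIcc_subset_uIcc_right h0)
  have hreflect_int : IntervalIntegrable (fun x => f (-x)) volume 0 R := by
    simpa using ((IntervalIntegrable.iff_comp_neg).1 hleft).symm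
  have hreflect : ∫ x in 0..R, f (-x) = ∫ x in -R..0, f x := by
    rw [intervalIntegral.integral_comp_neg, neg_zero]
  rw [intervalIntegral.integral_add hright hreflect_int, hreflect, add_comm,
    intervalIntegral.integral_add_adjacent_intervals hleft hright]

/-- The filter on `ℂ` of going along `l` in the real direction inside the strip `im z ∈ s`. -/
def stripFilter (l : Filter ℝ) (s : Set ℝ) : Filter ℂ :=
  comap Complex.re l ⊓ 𝓟 (Complex.im ⁻¹' s)

theorem tendsto_stripFilter {α : Type*} {k : Filter α} {l : Filter ℝ} {s : Set ℝ} {f : α → ℂ} :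
    Tendsto f k (stripFilter l s) ↔
      Tendsto (fun a => (f a).re) k l ∧ ∀ᶠ a in k, (f a).im ∈ s := by
  simp only [stripFilter, tendsto_inf, tendsto_comap_iff, tendsto_principal, mem_preimage,
    Function.comp_def]

theorem stripFilter_mono {s t : Set ℝ} (l : Filter ℝ) (hst : s ⊆ t) :
    stripFilter l s ≤ stripFilter l t :=
  inf_le_inf_left _ (principal_mono.2 (preimage_mono hst))

theorem tendsto_re_stripFilter (l : Filter ℝ) (s : Set ℝ) :
    Tendsto Complex.re (stripFilter l s) l :=
  (tendsto_stripFilter.1 tendsto_id).1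

theorem eventually_im_mem_stripFilter (l : Filter ℝ) (s : Set ℝ) :
    ∀ᶠ z in stripFilter l s, z.im ∈ s :=
  (tendsto_stripFilter.1 tendsto_id).2

variable [NormedSpace ℂ E] [CompleteSpace E] {f : ℂ → E} {a b : ℝ}

theorem tendsto_intervalIntegral_vertical {l : Filter ℝ} [l.IsCountablyGenerated] {L : E}
    (hf : ContinuousOn f (Complex.im ⁻¹' [[a, b]]))
    (hL : Tendsto f (stripFilter l [[a, b]]) (𝓝 L)) :
    Tendsto (fun R : ℝ => ∫ y in a..b, f (R + y * I)) l (𝓝 ((b - a) • L)) := by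
  have hcont : ∀ R : ℝ, ContinuousOn (fun y : ℝ => f (R + y * I)) [[a, b]] := fun R =>
    hf.comp (by fun_prop) fun y hy => by simpa using hy
  have hline : Tendsto (fun p : ℝ × ℝ => (p.1 + p.2 * I : ℂ)) (l ×ˢ 𝓟 [[a, b]])
      (stripFilter l [[a, b]]) :=
    tendsto_stripFilter.2 ⟨by simpa using tendsto_fst,
      (tendsto_snd.eventually (eventually_mem_set.2 (mem_principal_self [[a, b]]))).mono
        fun p hp => by simpa using hp⟩
  have hunif : TendstoUniformlyOn (fun (R : ℝ) (y : ℝ) => f (R + y * I)) (fun _ => L) l [[a, b]] :=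
    tendstoUniformlyOn_iff_tendsto.2 (Uniform.tendsto_nhds_right.1 (hL.comp hline))
  simpa using hunif.tendsto_intervalIntegral_of_continuousOn (μ := volume) (.of_forall hcont)

theorem tendsto_intervalIntegral_sub_horizontal {A B : E}
    (hf : DifferentiableOn ℂ f (Complex.im ⁻¹' [[a, b]]))
    (hA : Tendsto f (stripFilter atBot [[a, b]]) (𝓝 A))
    (hB : Tendsto f (stripFilter atTop [[a, b]]) (𝓝 B)) :
    Tendsto (fun R : ℝ => (∫ x in -R..R, f (x + a * I)) - ∫ x in -R..R, f (x + b * I)) atTop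
      (𝓝 (I • (b - a) • (A - B))) := by
  have hleft := (tendsto_intervalIntegral_vertical hf.continuousOn hA).comp tendsto_neg_atTop_atBot
  have hright := tendsto_intervalIntegral_vertical hf.continuousOn hB
  rw [smul_sub]
  refine ((hleft.sub hright).const_smul I).congr fun R => ?_
  have hrect := Complex.integral_boundary_rect_eq_zero_of_differentiableOn f
    ((-R : ℝ) + a * I) (R + b * I) (hf.mono fun z hz => by simpa using hz.2)
  simp only [Complex.add_re, Complex.add_im, Complex.mul_re, Complex.mul_im, Complex.ofReal_re,
    Complex.ofReal_im, Complex.I_re, Complex.I_im, mul_zero, mul_one, sub_zero, add_zero,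
    zero_add] at hrect
  rw [Function.comp_apply, smul_sub, ← sub_eq_zero, ← neg_eq_zero, ← hrect]
  abel

end ContourIntegration

section RemovableSingularities

variable {𝕜 E : Type*} [NontriviallyNormedField 𝕜] [NormedAddCommGroup E] [NormedSpace 𝕜 E]
  {f : 𝕜 → E} {U : Set 𝕜} {c : 𝕜}

theorem meromorphicOrderAt_nonneg_of_tendsto_sub_smul
    (hf : MeromorphicAt f c)
    (h : Tendsto (fun z => (z - c) • f z) (𝓝[≠] c) (𝓝 0)) : 0 ≤ meromorphicOrderAt f c := by
  have hsub : MeromorphicAt (fun z => z - c) c := by fun_prop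
  have hpos := (tendsto_zero_iff_meromorphicOrderAt_pos (hsub.smul hf)).1 h
  rw [meromorphicOrderAt_smul hsub hf, show meromorphicOrderAt (fun z => z - c) c = 1 from
    meromorphicOrderAt_id_sub_const] at hpos
  cases horder : meromorphicOrderAt f c with
  | top => exact le_top
  | coe n =>
    rw [horder] at hpos
    norm_cast at hpos ⊢
    lia

theorem analyticAt_toMeromorphicNFOn (hf : MeromorphicOn f U) (hc : c ∈ U)
    (horder : 0 ≤ meromorphicOrderAt f c) : AnalyticAt 𝕜 (toMeromorphicNFOn f U) c := by
  rwa [← (meromorphicNFOn_toMeromorphicNFOn f U hc).meromorphicOrderAt_nonneg_iff_analyticAt,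
    meromorphicOrderAt_toMeromorphicNFOn hf hc]

theorem toMeromorphicNFOn_apply_of_analyticAt (hf : MeromorphicOn f U) (hc : c ∈ U)
    (hfx : AnalyticAt 𝕜 f c) : toMeromorphicNFOn f U c = f c := by
  rw [toMeromorphicNFOn_eq_toMeromorphicNFAt hf hc,
    toMeromorphicNFAt_eq_self.2 hfx.meromorphicNFAt]

theorem tendsto_sub_div_of_hasDerivAt {g : 𝕜 → 𝕜} {g' : 𝕜} (hg : HasDerivAt g g' c)
    (hc : g c = 0) (hg' : g' ≠ 0) :
    Tendsto (fun z => (z - c) / g z) (𝓝[≠] c) (𝓝 g'⁻¹) := by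
  refine ((hasDerivAt_iff_tendsto_slope.1 hg).inv₀ hg').congr fun z => ?_
  rw [slope_def_field, hc, sub_zero, inv_div]

end RemovableSingularities

theorem tendsto_nhdsNE_of_continuousAt {X Y : Type*} [TopologicalSpace X] [TopologicalSpace Y]
    {f : X → Y} {x : X} {y : Y} (hf : ContinuousAt f x) (hy : f x = y) :
    Tendsto f (𝓝[≠] x) (𝓝 y) :=
  hy ▸ hf.continuousWithinAt

theorem tendsto_exp_mul_sq_sub_one_div_sq (a : ℂ) :
    Tendsto (fun z : ℂ => (Complex.exp (a * z ^ 2) - 1) / z ^ 2) (𝓝[≠] 0) (𝓝 a) := by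
  have hderiv : HasDerivAt (fun w : ℂ => Complex.exp (a * w)) a 0 := by
    simpa using ((hasDerivAt_id (0 : ℂ)).const_mul a).cexp
  have hsq : Tendsto (fun z : ℂ => z ^ 2) (𝓝[≠] 0) (𝓝[≠] 0) := by
    refine tendsto_nhdsWithin_iff.2 ⟨tendsto_nhdsNE_of_continuousAt (by fun_prop) (by simp), ?_⟩
    filter_upwards [self_mem_nhdsWithin] with z hz using pow_ne_zero 2 hz
  refine ((hasDerivAt_iff_tendsto_slope.1 hderiv).comp hsq).congr fun z => ?_
  simp [slope_def_field]

theorem sinh_pi_mul_eq_zero_iff {z : ℂ} : Complex.sinh (π * z) = 0 ↔ ∃ k : ℤ, z = k * I := by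
  rw [← neg_eq_zero, ← Complex.sinh_neg, ← mul_eq_zero_iff_right Complex.I_ne_zero,
    ← Complex.sin_mul_I, Complex.sin_eq_zero_iff]
  refine exists_congr fun k => ⟨fun h => ?_, fun h => ?_⟩
  · refine mul_left_cancel₀ (Complex.ofReal_ne_zero.2 pi_ne_zero) ?_
    linear_combination I * h + π * z * Complex.I_sq
  · rw [h]
    linear_combination -(π * k : ℂ) * Complex.I_sq

theorem sinh_pi_mul_ne_zero {z : ℂ} (hz : z ≠ 0) (him : |z.im| < 1) :
    Complex.sinh (π * z) ≠ 0 := by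
  rw [Ne, sinh_pi_mul_eq_zero_iff]
  rintro ⟨k, rfl⟩
  have hk : |k| < 1 := by simpa [← Int.cast_abs, ← Int.cast_one (R := ℝ), -Int.cast_one] using him
  simp [Int.abs_lt_one_iff.1 hk] at hz

theorem cosh_pi_mul_ne_zero {z : ℂ} (hz : z ≠ I / 2) (him : |z.im - 1 / 2| < 1) :
    Complex.cosh (π * z) ≠ 0 := by
  have hshift : (π * z : ℂ) = π * (z - I / 2) + (π / 2 : ℂ) * I := by ring
  rw [hshift, Complex.cosh_add, Complex.cosh_mul_I, Complex.sinh_mul_I]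
  simpa using sinh_pi_mul_ne_zero (sub_ne_zero.2 hz) (by simpa using him)

/-- A solution `F` of `F z - F (z + i) = (exp (2 π i z²) - 1) / sinh² (π z)`. As
`exp (2 π i (z + i)²) = exp (2 π i z²) exp (-4 π z)`, the first two terms already solve this
equation; the last two are `i`-periodic and chosen to cancel the poles at `0` and `i / 2`. -/
noncomputable def shiftPrimitive (z : ℂ) : ℂ :=
  (Complex.exp (2 * π * z ^ 2 * I) - 1) * Complex.exp (2 * π * z) /
      (4 * Complex.sinh (π * z) ^ 3 * Complex.cosh (π * z))
    - I * z / Complex.sinh (π * z) ^ 2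
    + I / (2 * π) * (Complex.cosh (π * z) / Complex.sinh (π * z))
    - (1 + I) / 4 * (Complex.sinh (π * z) / Complex.cosh (π * z))

theorem exp_two_pi_mul_sub_exp_neg (z : ℂ) :
    Complex.exp (2 * π * z) - Complex.exp (-(2 * π * z)) =
      4 * Complex.sinh (π * z) * Complex.cosh (π * z) := by
  rw [← Complex.two_sinh, mul_assoc 2, Complex.sinh_two_mul]
  ring

theorem shiftPrimitive_add_neg {z : ℂ} (hc : Complex.cosh (π * z) ≠ 0) :
    shiftPrimitive z + shiftPrimitive (-z) =
      (Complex.exp (2 * π * z ^ 2 * I) - 1) / Complex.sinh (π * z) ^ 2 := by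
  simp only [shiftPrimitive, mul_neg, neg_sq, Complex.sinh_neg, Complex.cosh_neg]
  rcases eq_or_ne (Complex.sinh (π * z)) 0 with hs | hs
  · simp [hs]
  field_simp
  linear_combination
    2 * π * (Complex.exp (2 * π * z ^ 2 * I) - 1) * exp_two_pi_mul_sub_exp_neg z

theorem shiftPrimitive_I_sub {z : ℂ} (hc : Complex.cosh (π * z) ≠ 0) :
    shiftPrimitive (I - z) = -shiftPrimitive z := by
  have hsinh : Complex.sinh (π * (I - z)) = Complex.sinh (π * z) := by
    simp [mul_sub, Complex.sinh_sub, Complex.sinh_mul_I, Complex.cosh_mul_I]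
  have hcosh : Complex.cosh (π * (I - z)) = -Complex.cosh (π * z) := by
    simp [mul_sub, Complex.cosh_sub, Complex.sinh_mul_I, Complex.cosh_mul_I]
  have hexp : Complex.exp (2 * π * (I - z)) = Complex.exp (-(2 * π * z)) := by
    rw [← Complex.exp_periodic (-(2 * π * z))]
    congr 1
    ring
  have hgauss : Complex.exp (2 * π * (I - z) ^ 2 * I) * Complex.exp (-(2 * π * z)) =
      Complex.exp (2 * π * z ^ 2 * I) * Complex.exp (2 * π * z) := by
    rw [← Complex.exp_add, ← Complex.exp_add, ← Complex.exp_periodic]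
    congr 1
    linear_combination (2 * π * I - 4 * π * z) * Complex.I_sq
  rw [shiftPrimitive, shiftPrimitive, hsinh, hcosh, hexp, sub_mul, hgauss]
  rcases eq_or_ne (Complex.sinh (π * z)) 0 with hs | hs
  · simp [hs]
  field_simp
  linear_combination -2 * π * exp_two_pi_mul_sub_exp_neg z -
    8 * π * Complex.sinh (π * z) * Complex.cosh (π * z) * Complex.I_sq

theorem tendsto_div_sinh_pi_mul :
    Tendsto (fun z : ℂ => z / Complex.sinh (π * z)) (𝓝[≠] 0) (𝓝 (π : ℂ)⁻¹) := by
  have hderiv : HasDerivAt (fun z : ℂ => Complex.sinh (π * z)) π 0 := by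
    simpa using ((hasDerivAt_id (0 : ℂ)).const_mul (π : ℂ)).csinh
  simpa using tendsto_sub_div_of_hasDerivAt hderiv (by simp) (by simp)

theorem sinh_pi_mul_I_div_two : Complex.sinh (π * (I / 2)) = I := by
  rw [mul_div_left_comm, mul_comm, Complex.sinh_mul_I]
  simp

theorem cosh_pi_mul_I_div_two : Complex.cosh (π * (I / 2)) = 0 := by
  rw [mul_div_left_comm, mul_comm, Complex.cosh_mul_I]
  simp

theorem meromorphic_shiftPrimitive : Meromorphic shiftPrimitive := by
  intro z
  unfold shiftPrimitive
  fun_prop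

theorem analyticAt_shiftPrimitive {z : ℂ} (him : z.im ∈ Icc 0 (1 / 2)) (h0 : z ≠ 0)
    (hI : z ≠ I / 2) : AnalyticAt ℂ shiftPrimitive z := by
  have hs := sinh_pi_mul_ne_zero h0 (abs_lt.2 ⟨by linarith [him.1], by linarith [him.2]⟩)
  have hc := cosh_pi_mul_ne_zero hI (abs_lt.2 ⟨by linarith [him.1], by linarith [him.2]⟩)
  unfold shiftPrimitive
  fun_prop (disch := simp [*])

theorem tendsto_mul_shiftPrimitive_zero :
    Tendsto (fun z => z * shiftPrimitive z) (𝓝[≠] 0) (𝓝 0) := by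
  have hπ : (π : ℂ) ≠ 0 := Complex.ofReal_ne_zero.2 pi_ne_zero
  have hsinh := tendsto_div_sinh_pi_mul
  have hgauss := tendsto_exp_mul_sq_sub_one_div_sq (2 * π * I)
  have hfactor : Tendsto (fun z : ℂ => Complex.exp (2 * π * z) / (4 * Complex.cosh (π * z)))
      (𝓝[≠] 0) (𝓝 (1 / 4)) :=
    tendsto_nhdsNE_of_continuousAt (by fun_prop (disch := simp)) (by simp)
  have hcosh : Tendsto (fun z : ℂ => Complex.cosh (π * z)) (𝓝[≠] 0) (𝓝 1) :=
    tendsto_nhdsNE_of_continuousAt (by fun_prop) (by simp)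
  have htanh : Tendsto (fun z : ℂ => z * (Complex.sinh (π * z) / Complex.cosh (π * z)))
      (𝓝[≠] 0) (𝓝 0) :=
    tendsto_nhdsNE_of_continuousAt (by fun_prop (disch := simp)) (by simp)
  have hlim := ((((hgauss.mul (hsinh.pow 3)).mul hfactor).sub
    ((hsinh.pow 2).const_mul I)).add ((hcosh.mul hsinh).const_mul (I / (2 * π)))).sub
    (htanh.const_mul ((1 + I) / 4))
  have hvalue : 2 * π * I * (π : ℂ)⁻¹ ^ 3 * (1 / 4) - I * (π : ℂ)⁻¹ ^ 2
      + I / (2 * π) * (1 * (π : ℂ)⁻¹) - (1 + I) / 4 * 0 = 0 := by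
    field_simp
    ring
  rw [hvalue] at hlim
  refine hlim.congr' ?_
  filter_upwards [self_mem_nhdsWithin] with z hz
  have hz0 : z ≠ 0 := hz
  have harg : 2 * π * I * z ^ 2 = 2 * π * z ^ 2 * I := by ring
  rw [shiftPrimitive, harg]
  field_simp

theorem tendsto_sub_mul_shiftPrimitive_I_div_two :
    Tendsto (fun z => (z - I / 2) * shiftPrimitive z) (𝓝[≠] (I / 2)) (𝓝 0) := by
  have hsinh := sinh_pi_mul_I_div_two
  have hderiv : HasDerivAt (fun z : ℂ => Complex.cosh (π * z)) (π * I) (I / 2) := by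
    simpa [hsinh, mul_comm] using ((hasDerivAt_id (I / 2)).const_mul (π : ℂ)).ccosh
  have hexp : Complex.exp (2 * π * (I / 2)) = -1 := by
    rw [← Complex.exp_pi_mul_I]
    ring_nf
  have hgauss : Complex.exp (2 * π * (I / 2) ^ 2 * I) = -I := by
    rw [show 2 * π * (I / 2) ^ 2 * I = (-(π / 2) : ℂ) * I by
      linear_combination π / 2 * I * Complex.I_sq, Complex.exp_mul_I]
    simp
  have hresidue : Tendsto (fun z : ℂ =>
      (Complex.exp (2 * π * z ^ 2 * I) - 1) * Complex.exp (2 * π * z) /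
        (4 * Complex.sinh (π * z) ^ 3) - (1 + I) / 4 * Complex.sinh (π * z))
      (𝓝[≠] (I / 2)) (𝓝 0) := by
    refine tendsto_nhdsNE_of_continuousAt ?_ ?_
    · fun_prop (disch := simp [hsinh])
    · rw [hsinh, hexp, hgauss, Complex.I_pow_three]
      field_simp
      linear_combination -(1 + I) * Complex.I_sq
  have hregular : Tendsto (fun z : ℂ => (z - I / 2) * (-(I * z / Complex.sinh (π * z) ^ 2) +
      I / (2 * π) * (Complex.cosh (π * z) / Complex.sinh (π * z)))) (𝓝[≠] (I / 2)) (𝓝 0) :=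
    tendsto_nhdsNE_of_continuousAt (by fun_prop (disch := simp [hsinh])) (by simp)
  have hlim := ((tendsto_sub_div_of_hasDerivAt hderiv cosh_pi_mul_I_div_two (by simp)).mul
    hresidue).add hregular
  rw [mul_zero, add_zero] at hlim
  refine hlim.congr fun z => ?_
  simp only [shiftPrimitive, div_eq_mul_inv, mul_inv]
  ring

theorem tendsto_mul_exp_neg_stripFilter_atTop {g : ℂ → ℂ} {s : Set ℝ}
    (hg : ∀ᶠ z in stripFilter atTop s, ‖g z‖ ≤ z.re + 1) :
    Tendsto (fun z => g z * Complex.exp (-(2 * π * z))) (stripFilter atTop s) (𝓝 0) := by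
  have hre := tendsto_re_stripFilter atTop s
  have hbound : Tendsto (fun x : ℝ => (x + 1) * Real.exp (-x)) atTop (𝓝 0) := by
    simpa [add_mul] using (tendsto_pow_mul_exp_neg_atTop_nhds_zero 1).add
      (tendsto_pow_mul_exp_neg_atTop_nhds_zero 0)
  refine squeeze_zero_norm' ?_ (hbound.comp hre)
  filter_upwards [hg, hre.eventually_ge_atTop 0] with z hgz hz
  rw [norm_mul, Complex.norm_exp]
  have hexp : (-(2 * π * z)).re ≤ -z.re := by
    simp only [Complex.neg_re, Complex.mul_re, Complex.re_ofNat, Complex.im_ofNat,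
      Complex.ofReal_re, Complex.ofReal_im, Complex.mul_im]
    nlinarith [pi_gt_three]
  exact mul_le_mul hgz (Real.exp_le_exp.2 hexp) (Real.exp_pos _).le (by positivity)

theorem shiftPrimitive_eq_of_exp_neg_eq {z q : ℂ} (hq : Complex.exp (-(2 * π * z)) = q) :
    shiftPrimitive z =
      4 * (Complex.exp (2 * π * z ^ 2 * I) * q - q) / ((1 - q) ^ 3 * (1 + q))
      - 4 * I * (z * q) / (1 - q) ^ 2
      + I / (2 * π) * ((1 + q) / (1 - q))
      - (1 + I) / 4 * ((1 - q) / (1 + q)) := by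
  have hp := Complex.exp_ne_zero (π * z)
  have hpos : Complex.exp (2 * π * z) = Complex.exp (π * z) ^ 2 := by
    rw [← Complex.exp_nat_mul]
    push_cast
    ring_nf
  replace hq : q = (Complex.exp (π * z) ^ 2)⁻¹ := by
    rw [← hq, Complex.exp_neg, hpos]
  have hsinh : Complex.sinh (π * z) = Complex.exp (π * z) * (1 - q) / 2 := by
    rw [Complex.sinh, Complex.exp_neg, hq]
    field_simp
  have hcosh : Complex.cosh (π * z) = Complex.exp (π * z) * (1 + q) / 2 := by
    rw [Complex.cosh, Complex.exp_neg, hq]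
    field_simp
  rw [shiftPrimitive, hsinh, hcosh, hpos]
  -- The denominators stay opaque because the identity also holds where they vanish.
  generalize 1 - q = u
  generalize 1 + q = v
  rw [hq]
  field_simp
  ring

theorem tendsto_shiftPrimitive_stripFilter_atTop :
    Tendsto shiftPrimitive (stripFilter atTop (Icc 0 1)) (𝓝 (I / (2 * π) - (1 + I) / 4)) := by
  have hre := (tendsto_re_stripFilter atTop (Icc 0 1)).eventually_ge_atTop 0
  have him := eventually_im_mem_stripFilter atTop (Icc 0 1)
  have hq : Tendsto (fun z : ℂ => Complex.exp (-(2 * π * z))) (stripFilter atTop (Icc 0 1))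
      (𝓝 0) := by
    simpa using tendsto_mul_exp_neg_stripFilter_atTop (g := fun _ => 1)
      (hre.mono fun z hz => by simpa using hz)
  have hgauss : Tendsto (fun z : ℂ => Complex.exp (2 * π * z ^ 2 * I) *
      Complex.exp (-(2 * π * z))) (stripFilter atTop (Icc 0 1)) (𝓝 0) := by
    refine tendsto_mul_exp_neg_stripFilter_atTop ?_
    filter_upwards [hre, him] with z hz hz'
    have hnorm : (2 * π * z ^ 2 * I).re = -(4 * π * z.re * z.im) := by
      simp [pow_two]
      ring
    have hle : ‖Complex.exp (2 * π * z ^ 2 * I)‖ ≤ 1 := by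
      rw [Complex.norm_exp, Real.exp_le_one_iff, hnorm, neg_nonpos]
      have := hz'.1
      positivity
    linarith
  have hlinear : Tendsto (fun z : ℂ => z * Complex.exp (-(2 * π * z)))
      (stripFilter atTop (Icc 0 1)) (𝓝 0) := by
    refine tendsto_mul_exp_neg_stripFilter_atTop ?_
    filter_upwards [hre, him] with z hz hz'
    have hnorm := Complex.norm_le_abs_re_add_abs_im z
    rw [abs_of_nonneg hz, abs_of_nonneg hz'.1] at hnorm
    exact hnorm.trans (by gcongr; exact hz'.2)
  have hsub := hq.const_sub 1
  have hadd := hq.const_add 1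
  rw [sub_zero] at hsub
  rw [add_zero] at hadd
  have hlim := (((((hgauss.sub hq).const_mul 4).div ((hsub.pow 3).mul hadd) (by simp)).sub
    ((hlinear.const_mul (4 * I)).div (hsub.pow 2) (by simp))).add
    ((hadd.div hsub one_ne_zero).const_mul (I / (2 * π)))).sub
    ((hsub.div hadd one_ne_zero).const_mul ((1 + I) / 4))
  convert hlim using 2 with z
  · exact shiftPrimitive_eq_of_exp_neg_eq rfl
  · simp

theorem tendsto_shiftPrimitive_stripFilter_atBot :
    Tendsto shiftPrimitive (stripFilter atBot (Icc 0 1)) (𝓝 (-(I / (2 * π) - (1 + I) / 4))) := by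
  have hreflect : Tendsto (fun z => I - z) (stripFilter atBot (Icc 0 1))
      (stripFilter atTop (Icc 0 1)) := by
    refine tendsto_stripFilter.2 ⟨?_, ?_⟩
    · simpa using tendsto_re_stripFilter atBot (Icc 0 1)
    · filter_upwards [eventually_im_mem_stripFilter atBot (Icc 0 1)] with z hz
      simpa [and_comm] using hz
  refine (tendsto_shiftPrimitive_stripFilter_atTop.comp hreflect).neg.congr' ?_
  filter_upwards [(tendsto_re_stripFilter atBot (Icc 0 1)).eventually_lt_atBot 0,
    eventually_im_mem_stripFilter atBot (Icc 0 1)] with z hre him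
  have hz : z ≠ I / 2 := by
    rintro rfl
    simp at hre
  have hcosh := cosh_pi_mul_ne_zero hz (abs_lt.2 ⟨by linarith [him.1], by linarith [him.2]⟩)
  rw [Function.comp_apply, shiftPrimitive_I_sub hcosh, neg_neg]

/-- The function `shiftPrimitive` with its removable singularities filled in. -/
noncomputable def regularizedShiftPrimitive : ℂ → ℂ :=
  toMeromorphicNFOn shiftPrimitive univ

theorem regularizedShiftPrimitive_apply {z : ℂ} (him : z.im ∈ Icc 0 (1 / 2)) (h0 : z ≠ 0)
    (hI : z ≠ I / 2) : regularizedShiftPrimitive z = shiftPrimitive z :=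
  toMeromorphicNFOn_apply_of_analyticAt (meromorphicOn_univ.2 meromorphic_shiftPrimitive)
    (mem_univ z) (analyticAt_shiftPrimitive him h0 hI)

theorem analyticAt_regularizedShiftPrimitive {z : ℂ} (him : z.im ∈ Icc 0 (1 / 2)) :
    AnalyticAt ℂ regularizedShiftPrimitive z := by
  refine analyticAt_toMeromorphicNFOn (meromorphicOn_univ.2 meromorphic_shiftPrimitive)
    (mem_univ z) ?_
  rcases eq_or_ne z 0 with rfl | h0
  · exact meromorphicOrderAt_nonneg_of_tendsto_sub_smul (meromorphic_shiftPrimitive 0)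
      (by simpa using tendsto_mul_shiftPrimitive_zero)
  rcases eq_or_ne z (I / 2) with rfl | hI
  · exact meromorphicOrderAt_nonneg_of_tendsto_sub_smul (meromorphic_shiftPrimitive (I / 2))
      tendsto_sub_mul_shiftPrimitive_I_div_two
  exact (analyticAt_shiftPrimitive him h0 hI).meromorphicOrderAt_nonneg

theorem regularizedShiftPrimitive_add_neg {x : ℝ} (hx : x ≠ 0) :
    regularizedShiftPrimitive x + regularizedShiftPrimitive (-x) =
      (Complex.exp (2 * π * x ^ 2 * I) - 1) / Complex.sinh (π * x) ^ 2 := by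
  have hne : ∀ y : ℝ, (y : ℂ) ≠ I / 2 := fun y h => by simpa using congrArg Complex.im h
  rw [← Complex.ofReal_neg,
    regularizedShiftPrimitive_apply (by simp) (Complex.ofReal_ne_zero.2 hx) (hne x),
    regularizedShiftPrimitive_apply (by simp) (Complex.ofReal_ne_zero.2 (neg_ne_zero.2 hx)) (hne _),
    Complex.ofReal_neg]
  exact shiftPrimitive_add_neg
    (cosh_pi_mul_ne_zero (hne x) (by norm_num [abs_lt]))

theorem regularizedShiftPrimitive_add_neg_add_I_div_two {x : ℝ} (hx : x ≠ 0) :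
    regularizedShiftPrimitive (x + I / 2) + regularizedShiftPrimitive (-x + I / 2) = 0 := by
  have him : ∀ y : ℝ, (y + I / 2 : ℂ).im = 1 / 2 := fun y => by simp
  have h0 : ∀ y : ℝ, (y + I / 2 : ℂ) ≠ 0 := fun y h => by simpa using congrArg Complex.im h
  have hI : ∀ y : ℝ, y ≠ 0 → (y + I / 2 : ℂ) ≠ I / 2 := fun y hy h => hy (by simpa using h)
  have hmem : ∀ y : ℝ, (y + I / 2 : ℂ).im ∈ Icc 0 (1 / 2) := fun y => by norm_num [him]
  rw [← Complex.ofReal_neg, regularizedShiftPrimitive_apply (hmem x) (h0 x) (hI x hx),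
    regularizedShiftPrimitive_apply (hmem _) (h0 _) (hI _ (neg_ne_zero.2 hx)),
    show ((-x : ℝ) + I / 2 : ℂ) = I - (x + I / 2) by push_cast; ring,
    shiftPrimitive_I_sub (cosh_pi_mul_ne_zero (hI x hx) (by norm_num)), add_neg_cancel]

theorem tendsto_regularizedShiftPrimitive_stripFilter {l : Filter ℝ} {L : ℂ}
    (hl : ∀ᶠ x in l, x ≠ 0) (h : Tendsto shiftPrimitive (stripFilter l (Icc 0 1)) (𝓝 L)) :
    Tendsto regularizedShiftPrimitive (stripFilter l (Icc 0 (1 / 2))) (𝓝 L) := by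
  have hsub : Icc (0 : ℝ) (1 / 2) ⊆ Icc 0 1 := Icc_subset_Icc_right (by norm_num)
  refine (h.mono_left (stripFilter_mono l hsub)).congr' ?_
  filter_upwards [(tendsto_re_stripFilter l _).eventually hl,
    eventually_im_mem_stripFilter l _] with z hre him
  refine (regularizedShiftPrimitive_apply him ?_ ?_).symm <;>
  · rintro rfl
    simp at hre

theorem continuous_regularizedShiftPrimitive_horizontal {y : ℝ} (hy : y ∈ Icc 0 (1 / 2)) :
    Continuous fun x : ℝ => regularizedShiftPrimitive (x + y * I) :=
  continuous_iff_continuousAt.2 fun x => ContinuousAt.comp (f := fun x : ℝ => (x + y * I : ℂ))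
    (analyticAt_regularizedShiftPrimitive (by simpa using hy)).continuousAt (by fun_prop)

theorem intervalIntegral_regularizedShiftPrimitive (R : ℝ) :
    ∫ x : ℝ in -R..R, regularizedShiftPrimitive x =
      ∫ x : ℝ in 0..R, (Complex.exp (2 * π * x ^ 2 * I) - 1) / Complex.sinh (π * x) ^ 2 := by
  have hcont : Continuous fun x : ℝ => regularizedShiftPrimitive x := by
    simpa using continuous_regularizedShiftPrimitive_horizontal (y := 0) (by norm_num)
  rw [intervalIntegral_neg_self_eq (hcont.intervalIntegrable _ _)]
  refine intervalIntegral.integral_congr_ae ?_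
  filter_upwards [Measure.ae_ne volume 0] with x hx _
  simpa using regularizedShiftPrimitive_add_neg hx

theorem intervalIntegral_regularizedShiftPrimitive_add_I_div_two (R : ℝ) :
    ∫ x : ℝ in -R..R, regularizedShiftPrimitive (x + I / 2) = 0 := by
  have hcont : Continuous fun x : ℝ => regularizedShiftPrimitive (x + I / 2) := by
    simpa [div_eq_inv_mul] using
      continuous_regularizedShiftPrimitive_horizontal (y := 1 / 2) (by norm_num)
  rw [intervalIntegral_neg_self_eq (hcont.intervalIntegrable _ _)]
  refine intervalIntegral.integral_zero_ae ?_
  filter_upwards [Measure.ae_ne volume 0] with x hx _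
  simpa using regularizedShiftPrimitive_add_neg_add_I_div_two hx

theorem tendsto_intervalIntegral_exp_sub_one_div_sinh_sq :
    Tendsto (fun R : ℝ => ∫ x : ℝ in 0..R,
        (Complex.exp (2 * π * x ^ 2 * I) - 1) / Complex.sinh (π * x) ^ 2) atTop
      (𝓝 (1 / (2 * π) - 1 / 4 + I / 4)) := by
  have hstrip : [[(0 : ℝ), 1 / 2]] = Icc 0 (1 / 2) := uIcc_of_le (by norm_num)
  have hcontour := tendsto_intervalIntegral_sub_horizontal (f := regularizedShiftPrimitive)
    (a := 0) (b := 1 / 2)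
    (fun z hz => (analyticAt_regularizedShiftPrimitive
      (hstrip ▸ hz)).differentiableAt.differentiableWithinAt)
    (hstrip ▸ tendsto_regularizedShiftPrimitive_stripFilter (eventually_ne_atBot 0)
      tendsto_shiftPrimitive_stripFilter_atBot)
    (hstrip ▸ tendsto_regularizedShiftPrimitive_stripFilter (eventually_ne_atTop 0)
      tendsto_shiftPrimitive_stripFilter_atTop)
  have hhalf : ((1 / 2 : ℝ) : ℂ) * I = I / 2 := by
    push_cast
    ring
  simp only [Complex.ofReal_zero, zero_mul, add_zero, hhalf,
    intervalIntegral_regularizedShiftPrimitive,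
    intervalIntegral_regularizedShiftPrimitive_add_I_div_two, sub_zero] at hcontour
  convert hcontour using 2
  rw [Complex.real_smul, smul_eq_mul]
  push_cast
  field_simp
  linear_combination (8 - 4 * π) * Complex.I_sq

theorem sq_le_sinh_sq (x : ℝ) : x ^ 2 ≤ Real.sinh x ^ 2 := by
  rw [sq_le_sq, Real.abs_sinh]
  exact Real.self_le_sinh_iff.2 (abs_nonneg x)

theorem norm_exp_sub_one_div_sinh_sq_le (ω x : ℝ) :
    ‖(Complex.exp (ω * x ^ 2 * I) - 1) / Complex.sinh (π * x) ^ 2‖ ≤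
      (|ω| + 2) * (1 + x ^ 2)⁻¹ := by
  have hphase : (ω * x ^ 2 * I : ℂ) = I * ((ω * x ^ 2 : ℝ) : ℂ) := by
    push_cast
    ring
  have hsmall : ‖Complex.exp (ω * x ^ 2 * I) - 1‖ ≤ |ω| * x ^ 2 := by
    rw [hphase]
    exact Real.norm_exp_I_mul_ofReal_sub_one_le.trans_eq (by simp)
  have hbounded : ‖Complex.exp (ω * x ^ 2 * I) - 1‖ ≤ 2 := by
    rw [hphase]
    calc ‖Complex.exp (I * ((ω * x ^ 2 : ℝ) : ℂ)) - 1‖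
        ≤ ‖Complex.exp (I * ((ω * x ^ 2 : ℝ) : ℂ))‖ + ‖(1 : ℂ)‖ := norm_sub_le _ _
      _ = 2 := by rw [Complex.norm_exp_I_mul_ofReal, norm_one]; norm_num
  have hsinh : x ^ 2 ≤ ‖Complex.sinh (π * x) ^ 2‖ := by
    rw [← Complex.ofReal_mul, ← Complex.ofReal_sinh, ← Complex.ofReal_pow, Complex.norm_real,
      Real.norm_of_nonneg (sq_nonneg _)]
    refine le_trans ?_ (sq_le_sinh_sq _)
    rw [mul_pow]
    exact le_mul_of_one_le_left (sq_nonneg x) (by nlinarith [pi_gt_three])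
  have hquot : ‖Complex.exp (ω * x ^ 2 * I) - 1‖ ≤ (|ω| + 2) * (1 + x ^ 2)⁻¹ * x ^ 2 := by
    rw [mul_assoc (|ω| + 2), inv_mul_eq_div, ← mul_div_assoc, le_div_iff₀ (by positivity)]
    nlinarith [sq_nonneg x]
  rw [norm_div]
  exact div_le_of_le_mul₀ (norm_nonneg _) (by positivity) (hquot.trans (by gcongr))

theorem integrable_exp_sub_one_div_sinh_sq (ω : ℝ) :
    Integrable fun x : ℝ => (Complex.exp (ω * x ^ 2 * I) - 1) / Complex.sinh (π * x) ^ 2 :=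
  (integrable_inv_one_add_sq.const_mul (|ω| + 2)).mono'
    (Measurable.aestronglyMeasurable (by fun_prop))
    (.of_forall (norm_exp_sub_one_div_sinh_sq_le ω))

theorem im_exp_sub_one_div_sinh_sq (ω x : ℝ) :
    ((Complex.exp (ω * x ^ 2 * I) - 1) / Complex.sinh (π * x) ^ 2).im =
      Real.sin (ω * x ^ 2) / Real.sinh (π * x) ^ 2 := by
  have hnum : (Complex.exp (ω * x ^ 2 * I) - 1).im = Real.sin (ω * x ^ 2) := by
    rw [← Complex.ofReal_pow, ← Complex.ofReal_mul, Complex.sub_im, Complex.exp_ofReal_mul_I_im,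
      Complex.one_im, sub_zero]
  have hden : Complex.sinh (π * x) ^ 2 = ((Real.sinh (π * x) ^ 2 : ℝ) : ℂ) := by
    push_cast
    rfl
  rw [hden, Complex.div_ofReal_im, hnum]

theorem integrable_sin_mul_sq_div_sinh_sq (ω : ℝ) :
    Integrable fun x : ℝ => Real.sin (ω * x ^ 2) / Real.sinh (π * x) ^ 2 := by
  simpa only [RCLike.im_to_complex, im_exp_sub_one_div_sinh_sq] using
    (integrable_exp_sub_one_div_sinh_sq ω).im

theorem integral_sin_two_pi_mul_sq_div_sinh_sq :
    ∫ x in Ioi (0 : ℝ), Real.sin (2 * π * x ^ 2) / Real.sinh (π * x) ^ 2 = 1 / 4 := by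
  have hint := (integrable_exp_sub_one_div_sinh_sq (2 * π)).integrableOn (s := Ioi 0)
  have hvalue := tendsto_nhds_unique (intervalIntegral_tendsto_integral_Ioi 0 hint tendsto_id)
    (by simpa using tendsto_intervalIntegral_exp_sub_one_div_sinh_sq)
  have him := integral_im hint
  rw [hvalue] at him
  simp only [RCLike.im_to_complex, im_exp_sub_one_div_sinh_sq] at him
  rw [him]
  norm_num

theorem two_mul_mul_one_add_sq_le_exp_sub_one {t : ℝ} (ht : 0 ≤ t) :
    2 * t * (1 + t ^ 2) ≤ Real.exp (2 * π * t) - 1 := by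
  have hcubic := Real.sum_le_exp_of_nonneg (x := 6 * t) (by positivity) 4
  simp only [Finset.sum_range_succ, Finset.sum_range_zero, Nat.factorial] at hcubic
  have hmono : Real.exp (6 * t) ≤ Real.exp (2 * π * t) := by
    gcongr
    linarith [pi_gt_three]
  norm_num at hcubic
  nlinarith [pow_nonneg ht 3]

theorem inv_exp_two_pi_mul_sub_one_nonneg {t : ℝ} (ht : 0 ≤ t) :
    0 ≤ (Real.exp (2 * π * t) - 1)⁻¹ := by
  rw [inv_nonneg, sub_nonneg, Real.one_le_exp_iff]
  positivity

theorem inv_exp_two_pi_mul_sub_one_le {t : ℝ} (ht : 0 < t) :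
    (Real.exp (2 * π * t) - 1)⁻¹ ≤ (2 * t)⁻¹ * (1 + t ^ 2)⁻¹ := by
  rw [← mul_inv]
  exact inv_anti₀ (by positivity) (two_mul_mul_one_add_sq_le_exp_sub_one ht.le)

theorem integrableOn_mul_cos_mul_sq_div_exp_sub_one (ω : ℝ) :
    IntegrableOn (fun t : ℝ => 2 * t * Real.cos (ω * t ^ 2) * (Real.exp (2 * π * t) - 1)⁻¹)
      (Ioi 0) := by
  refine integrable_inv_one_add_sq.integrableOn.mono'
    (Measurable.aestronglyMeasurable (by fun_prop)) ?_
  filter_upwards [ae_restrict_mem measurableSet_Ioi] with t ht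
  have ht : 0 < t := ht
  have hpos := inv_exp_two_pi_mul_sub_one_nonneg ht.le
  calc ‖2 * t * Real.cos (ω * t ^ 2) * (Real.exp (2 * π * t) - 1)⁻¹‖
      = 2 * t * |Real.cos (ω * t ^ 2)| * (Real.exp (2 * π * t) - 1)⁻¹ := by
        rw [norm_mul, norm_mul, Real.norm_of_nonneg hpos, Real.norm_of_nonneg (by positivity),
          Real.norm_eq_abs]
    _ ≤ 2 * t * 1 * ((2 * t)⁻¹ * (1 + t ^ 2)⁻¹) := by
        gcongr
        exacts [Real.abs_cos_le_one _, inv_exp_two_pi_mul_sub_one_le ht]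
    _ = (1 + t ^ 2)⁻¹ := by field_simp

theorem hasDerivAt_inv_exp_two_pi_mul_sub_one {t : ℝ} (ht : 0 < t) :
    HasDerivAt (fun t : ℝ => (Real.exp (2 * π * t) - 1)⁻¹)
      (-(π / 2) * (Real.sinh (π * t) ^ 2)⁻¹) t := by
  have hexp : Real.exp (2 * π * t) = Real.exp (π * t) ^ 2 := by
    rw [← Real.exp_nat_mul]
    push_cast
    ring_nf
  have hsinh : Real.exp (2 * π * t) - 1 = 2 * Real.exp (π * t) * Real.sinh (π * t) := by
    rw [hexp, Real.sinh_eq, Real.exp_neg]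
    field_simp
  have hpos : 0 < Real.sinh (π * t) := Real.sinh_pos_iff.2 (by positivity)
  have hderiv : HasDerivAt (fun t : ℝ => Real.exp (2 * π * t) - 1)
      (Real.exp (2 * π * t) * (2 * π)) t := by
    simpa using (((hasDerivAt_id t).const_mul (2 * π)).exp).sub_const 1
  refine (hderiv.fun_inv (hsinh ▸ (mul_pos (by positivity) hpos).ne')).congr_deriv ?_
  rw [hsinh, hexp]
  field_simp

theorem tendsto_sin_mul_sq_mul_inv_exp_sub_one_nhdsGT_zero (ω : ℝ) :
    Tendsto (fun t : ℝ => Real.sin (ω * t ^ 2) * (Real.exp (2 * π * t) - 1)⁻¹) (𝓝[>] 0) (𝓝 0) := by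
  have hbound : Tendsto (fun t : ℝ => |ω| * t) (𝓝[>] 0) (𝓝 0) :=
    tendsto_nhdsWithin_of_tendsto_nhds (Continuous.tendsto' (by fun_prop) _ _ (by simp))
  refine squeeze_zero_norm' ?_ hbound
  filter_upwards [self_mem_nhdsWithin] with t ht
  have ht : 0 < t := ht
  have hpos := inv_exp_two_pi_mul_sub_one_nonneg ht.le
  have hinv : (Real.exp (2 * π * t) - 1)⁻¹ ≤ t⁻¹ :=
    inv_anti₀ ht (by nlinarith [two_mul_mul_one_add_sq_le_exp_sub_one ht.le, pow_pos ht 3])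
  calc ‖Real.sin (ω * t ^ 2) * (Real.exp (2 * π * t) - 1)⁻¹‖
      = |Real.sin (ω * t ^ 2)| * (Real.exp (2 * π * t) - 1)⁻¹ := by
        rw [norm_mul, Real.norm_of_nonneg hpos, Real.norm_eq_abs]
    _ ≤ |ω * t ^ 2| * t⁻¹ := mul_le_mul Real.abs_sin_le_abs hinv hpos (abs_nonneg _)
    _ = |ω| * t := by
        rw [abs_mul, abs_sq]
        field_simp

theorem tendsto_sin_mul_sq_mul_inv_exp_sub_one_atTop (ω : ℝ) :
    Tendsto (fun t : ℝ => Real.sin (ω * t ^ 2) * (Real.exp (2 * π * t) - 1)⁻¹) atTop (𝓝 0) := by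
  have hexp : Tendsto (fun t : ℝ => Real.exp (2 * π * t) - 1) atTop atTop :=
    tendsto_atTop_add_const_right _ _
      (Real.tendsto_exp_atTop.comp (tendsto_id.const_mul_atTop (by positivity)))
  refine bdd_le_mul_tendsto_zero' 1 (.of_forall fun t => Real.abs_sin_le_one _) ?_
  exact hexp.inv_tendsto_atTop

theorem mul_integral_mul_cos_mul_sq_div_exp_sub_one (ω : ℝ) :
    ω * ∫ t in Ioi (0 : ℝ), 2 * t * Real.cos (ω * t ^ 2) * (Real.exp (2 * π * t) - 1)⁻¹ =
      π / 2 * ∫ x in Ioi (0 : ℝ), Real.sin (ω * x ^ 2) / Real.sinh (π * x) ^ 2 := by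
  have hderiv : ∀ t ∈ Ioi (0 : ℝ), HasDerivAt (fun t : ℝ => Real.sin (ω * t ^ 2))
      (ω * (2 * t * Real.cos (ω * t ^ 2))) t := fun t _ =>
    (((hasDerivAt_pow 2 t).const_mul ω).sin).congr_deriv (by simp; ring)
  have hsin : IntegrableOn (fun t : ℝ => -(π / 2) * (Real.sin (ω * t ^ 2) / Real.sinh (π * t) ^ 2))
      (Ioi 0) := ((integrable_sin_mul_sq_div_sinh_sq ω).const_mul _).integrableOn
  have hcos : IntegrableOn (fun t : ℝ =>
      ω * (2 * t * Real.cos (ω * t ^ 2) * (Real.exp (2 * π * t) - 1)⁻¹)) (Ioi 0) :=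
    (integrableOn_mul_cos_mul_sq_div_exp_sub_one ω).const_mul ω
  have hparts := integral_Ioi_mul_deriv_eq_deriv_mul hderiv
    (fun t ht => hasDerivAt_inv_exp_two_pi_mul_sub_one ht)
    (hsin.congr_fun (fun t _ => by simp only [Pi.mul_apply]; ring) measurableSet_Ioi)
    (hcos.congr_fun (fun t _ => by simp only [Pi.mul_apply]; ring) measurableSet_Ioi)
    (tendsto_sin_mul_sq_mul_inv_exp_sub_one_nhdsGT_zero ω)
    (tendsto_sin_mul_sq_mul_inv_exp_sub_one_atTop ω)
  have hright : ∫ t in Ioi (0 : ℝ), Real.sin (ω * t ^ 2) *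
      (-(π / 2) * (Real.sinh (π * t) ^ 2)⁻¹) =
      -(π / 2) * ∫ t in Ioi (0 : ℝ), Real.sin (ω * t ^ 2) / Real.sinh (π * t) ^ 2 := by
    rw [← integral_const_mul]
    congr with t
    ring
  simp only [mul_assoc ω, integral_const_mul, hright, sub_zero, zero_sub] at hparts
  linarith

theorem integrableOn_cos_mul_div_exp_sqrt_sub_one (ω : ℝ) :
    IntegrableOn (fun x : ℝ => Real.cos (ω * x) / (Real.exp (2 * π * √x) - 1)) (Ioi 0) := by
  rw [← integrableOn_Ioi_comp_rpow_iff _ two_ne_zero]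
  refine (integrableOn_mul_cos_mul_sq_div_exp_sub_one ω).congr_fun (fun t (ht : 0 < t) => ?_)
    measurableSet_Ioi
  norm_num [Real.sqrt_sq ht.le]
  ring

theorem mul_integral_cos_mul_div_exp_sqrt_sub_one (ω : ℝ) :
    ω * ∫ x in Ioi (0 : ℝ), Real.cos (ω * x) / (Real.exp (2 * π * √x) - 1) =
      π / 2 * ∫ x in Ioi (0 : ℝ), Real.sin (ω * x ^ 2) / Real.sinh (π * x) ^ 2 := by
  rw [← mul_integral_mul_cos_mul_sq_div_exp_sub_one, ← integral_comp_rpow_Ioi _ two_ne_zero]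
  congr 1
  refine setIntegral_congr_fun measurableSet_Ioi fun t (ht : 0 < t) => ?_
  norm_num [Real.sqrt_sq ht.le]
  ring

/-- Ramanujan's integral `R_C(0, 2)` converges and equals `1/16`. -/
theorem ramanujan_RC_zero_two :
    IntegrableOn
      (fun x : ℝ => Real.cos (2 * π * x) / (Real.exp (2 * π * Real.sqrt x) - 1)) (Ioi 0) ∧
    (∫ x in Ioi (0:ℝ), Real.cos (2 * π * x) / (Real.exp (2 * π * Real.sqrt x) - 1)) = 1 / 16 := by
  have hreduce := mul_integral_cos_mul_div_exp_sqrt_sub_one (2 * π)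
  rw [integral_sin_two_pi_mul_sq_div_sinh_sq] at hreduce
  refine ⟨integrableOn_cos_mul_div_exp_sqrt_sub_one (2 * π),
    mul_left_cancel₀ two_pi_pos.ne' (hreduce.trans ?_)⟩
  ring
end

section
/- The integral R_C(0, 4) = ∫_0^∞ cos(4πx)/(exp(2π√x) − 1) dx converges and equals (3 − √2)/32. -/
open MeasureTheory Real Set

/-!
The partial fraction expansion of the cotangent on the imaginary axis exhibits
`2 / (√x * (exp (2π√x) - 1))` as the Laplace transform, at `π x`, of the theta series
`ϑ(u) = ∑ k, exp (-π u k²)` minus its leading term `u ^ (-1/2)`. This remainder is nonnegative, so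
Fubini's theorem applies and, with `b = u + a`, turns `∫ exp (-π a x) / (exp (2π√x) - 1) dx` into a
multiple of `∫ b ^ (-3/2) (ϑ(u) - u ^ (-1/2)) du`.

For `a = 2ri` with `r` a nonzero integer, `ϑ(u) = ϑ(b)` by periodicity, and inversion gives
`b ^ (-3/2) ϑ(u) = ∑ k, exp (-π k² / b) / b²`, whose terms have elementary antiderivatives. The
`k = 0` term and the term `u ^ (-1/2)` contribute purely imaginary integrals, so taking real parts
leaves `4π R_C(0, 2r) = ∑ k, (1 - cos (π k² / (2r))) / (π k²)`, with the term `k = 0` omitted. For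
`r = 2` the numerator depends only on `gcd(k, 4)`, and the series reduces to `ζ(2)`.
-/

/-! ### Partial fractions of the cotangent -/

theorem hasSum_int_one_div_sq_sub_sq {z : ℂ} (hz : z ∈ Complex.integerComplement) :
    HasSum (fun k : ℤ ↦ 1 / (z ^ 2 - (k : ℂ) ^ 2)) (π * Complex.cot (π * z) / z) := by
  have hz0 : z ≠ 0 := Complex.integerComplement.ne_zero hz
  have hterm (n : ℕ) : 1 / (z - (n + 1)) + 1 / (z + (n + 1)) =
      2 * z * (1 / (z ^ 2 - ((n + 1 : ℕ) : ℂ) ^ 2)) := by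
    have hsub : z - (n + 1) ≠ 0 := by
      simpa [sub_eq_add_neg, add_comm] using Complex.integerComplement_add_ne_zero hz (-(n + 1))
    have hadd : z + (n + 1) ≠ 0 := by
      exact_mod_cast Complex.integerComplement_add_ne_zero hz (n + 1 : ℤ)
    have hprod : z ^ 2 - ((n + 1 : ℕ) : ℂ) ^ 2 = (z - (n + 1)) * (z + (n + 1)) := by
      push_cast
      ring
    rw [hprod]
    field_simp
    ring
  have hcot : HasSum (fun n : ℕ ↦ 1 / (z ^ 2 - ((n + 1 : ℕ) : ℂ) ^ 2))
      ((π * Complex.cot (π * z) - 1 / z) / (2 * z)) := by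
    rw [cot_series_rep' hz]
    have hsum := (summable_cotTerm hz).hasSum.div_const (2 * z)
    simp only [cotTerm, hterm] at hsum ⊢
    simpa [hz0] using hsum
  convert! HasSum.of_add_one_of_neg_add_one (f := fun k : ℤ ↦ 1 / (z ^ 2 - (k : ℂ) ^ 2))
    (by exact_mod_cast hcot) (hcot.congr_fun fun n ↦ by push_cast; ring) using 1
  simp only [Int.cast_zero]
  field_simp
  ring

theorem cot_pi_mul_ofReal_mul_I {t : ℝ} (ht : t ≠ 0) :
    Complex.cot (π * (t * Complex.I)) =
      -Complex.I * (1 + 2 / (Complex.exp (2 * π * t) - 1)) := by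
  have hexp_sub_one : Complex.exp (2 * π * t) - 1 ≠ 0 := by
    have hreal : rexp (2 * π * t) - 1 ≠ 0 := by simp [sub_eq_zero, pi_ne_zero, ht]
    exact_mod_cast hreal
  have hone_sub_inv : 1 - (Complex.exp (2 * π * t))⁻¹ ≠ 0 := by
    rwa [sub_ne_zero, ne_comm, inv_ne_one, ← sub_ne_zero]
  have hexp : Complex.exp (2 * π * Complex.I * (t * Complex.I)) = (Complex.exp (2 * π * t))⁻¹ := by
    rw [← Complex.exp_neg]
    congr 1
    linear_combination (2 * π * t : ℂ) * Complex.I_mul_I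
  have hexp_ne_zero := Complex.exp_ne_zero (2 * π * t)
  rw [Complex.cot_pi_eq_exp_ratio, hexp, div_eq_iff (by simp [hone_sub_inv])]
  field_simp
  linear_combination (Complex.exp (2 * π * t) + 1) * Complex.I_sq

theorem hasSum_int_one_div_sq_add_sq {t : ℝ} (ht : t ≠ 0) :
    HasSum (fun k : ℤ ↦ 1 / (t ^ 2 + (k : ℝ) ^ 2))
      (π / t * (1 + 2 / (rexp (2 * π * t) - 1))) := by
  have hz : (t * Complex.I : ℂ) ∈ Complex.integerComplement := by
    rintro ⟨n, hn⟩
    simpa [ht.symm] using congrArg Complex.im hn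
  have hsum := (hasSum_int_one_div_sq_sub_sq hz).neg
  rw [cot_pi_mul_ofReal_mul_I ht] at hsum
  rw [← Complex.hasSum_ofReal]
  convert! hsum using 1
  · ext k
    push_cast
    rw [mul_pow, Complex.I_sq, one_div, one_div, ← inv_neg]
    ring_nf
  · push_cast
    field_simp

/-! ### The kernel as a Laplace transform -/

theorem exp_two_pi_mul_sqrt_sub_one_pos {x : ℝ} (hx : 0 < x) : 0 < rexp (2 * π * √x) - 1 := by
  have : 0 < 2 * π * √x := by positivity
  simpa using this

theorem integral_exp_mul_tsum_exp {x : ℝ} (hx : 0 < x) :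
    ∫ u in Ioi (0 : ℝ), rexp (-π * x * u) * ∑' k : ℤ, rexp (-π * u * (k : ℝ) ^ 2) =
      1 / √x * (1 + 2 / (rexp (2 * π * √x) - 1)) := by
  have hexponent (k : ℤ) : -(π * (x + (k : ℝ) ^ 2)) < 0 := by
    rw [neg_neg_iff_pos]
    positivity
  have hterm (k : ℤ) : ∫ u in Ioi (0 : ℝ), rexp (-(π * (x + (k : ℝ) ^ 2)) * u) =
      1 / π * (1 / (√x ^ 2 + (k : ℝ) ^ 2)) := by
    rw [integral_exp_mul_Ioi (hexponent k), sq_sqrt hx.le]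
    simp [mul_comm]
  have hsum := (hasSum_int_one_div_sq_add_sq (sqrt_pos.2 hx).ne').mul_left (1 / π)
  have hswap := hasSum_integral_of_summable_integral_norm
    (fun k : ℤ ↦ integrableOn_exp_mul_Ioi (hexponent k) 0)
    (by simpa only [norm_eq_abs, abs_exp, hterm] using hsum.summable)
  simp only [hterm] at hswap
  have hprod (u : ℝ) : rexp (-π * x * u) * ∑' k : ℤ, rexp (-π * u * (k : ℝ) ^ 2) =
      ∑' k : ℤ, rexp (-(π * (x + (k : ℝ) ^ 2)) * u) := by
    rw [← tsum_mul_left]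
    congr! 2 with k
    rw [← exp_add]
    ring_nf
  simp only [hprod, hswap.unique hsum]
  field_simp

/-- The theta series `ϑ(u) = ∑ k, exp (-π u k²)` minus its leading term `u ^ (-1/2)` at the cusp
`u → 0`; removing it leaves the function whose Laplace transform is the kernel
`1 / (exp (2π√x) - 1)`, up to a factor `2 / √x`. -/
noncomputable def thetaRemainder (u : ℝ) : ℝ :=
  ∑' k : ℤ, rexp (-π * u * (k : ℝ) ^ 2) - 1 / u ^ (1 / 2 : ℝ)

theorem thetaRemainder_nonneg {u : ℝ} (hu : 0 < u) : 0 ≤ thetaRemainder u := by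
  have hsum : Summable fun k : ℤ ↦ rexp (-π / u * (k : ℝ) ^ 2) := by
    simpa [div_eq_mul_inv, mul_assoc] using
      summable_pow_mul_jacobiTheta₂_term_bound 0 (inv_pos.2 hu) 0
  have hone : 1 ≤ ∑' k : ℤ, rexp (-π / u * (k : ℝ) ^ 2) := by
    simpa using hsum.le_tsum 0 fun k _ ↦ (exp_pos _).le
  rw [thetaRemainder, Real.tsum_exp_neg_mul_int_sq hu, sub_nonneg]
  exact le_mul_of_one_le_right (by positivity) hone

theorem integral_exp_mul_one_div_rpow {x : ℝ} (hx : 0 < x) :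
    ∫ u in Ioi (0 : ℝ), rexp (-π * x * u) * (1 / u ^ (1 / 2 : ℝ)) = 1 / √x := by
  have h := Real.integral_rpow_mul_exp_neg_mul_Ioi (a := 1 / 2) (by norm_num) (mul_pos pi_pos hx)
  rw [Gamma_one_half_eq, ← sqrt_eq_rpow, ← sqrt_mul (by positivity)] at h
  convert h using 1
  · refine setIntegral_congr_fun measurableSet_Ioi fun u hu ↦ ?_
    rw [show (1 / 2 - 1 : ℝ) = -(1 / 2) by norm_num, rpow_neg (le_of_lt hu), one_div (u ^ _)]
    ring_nf
  · rw [one_div, ← sqrt_inv]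
    congr 1
    field_simp

theorem integral_exp_mul_thetaRemainder {x : ℝ} (hx : 0 < x) :
    ∫ u in Ioi (0 : ℝ), rexp (-π * x * u) * thetaRemainder u =
      2 / (√x * (rexp (2 * π * √x) - 1)) := by
  have hpos := exp_two_pi_mul_sqrt_sub_one_pos hx
  have htheta := integral_exp_mul_tsum_exp hx
  have hcusp := integral_exp_mul_one_div_rpow hx
  simp only [thetaRemainder, mul_sub]
  rw [integral_sub (.of_integral_ne_zero (by rw [htheta]; positivity))
    (.of_integral_ne_zero (by rw [hcusp]; positivity)), htheta, hcusp]
  field_simp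
  ring

theorem integrableOn_exp_mul_thetaRemainder {x : ℝ} (hx : 0 < x) :
    IntegrableOn (fun u ↦ rexp (-π * x * u) * thetaRemainder u) (Ioi 0) := by
  have hpos := exp_two_pi_mul_sqrt_sub_one_pos hx
  refine .of_integral_ne_zero ?_
  rw [integral_exp_mul_thetaRemainder hx]
  positivity

theorem aestronglyMeasurable_thetaRemainder :
    AEStronglyMeasurable thetaRemainder (volume.restrict (Ioi 0)) := by
  have h := (integrableOn_exp_mul_thetaRemainder one_pos).aestronglyMeasurable
  have hexp : Continuous fun u ↦ rexp (π * u) := by fun_prop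
  refine (hexp.aestronglyMeasurable.mul h).congr (.of_forall fun u ↦ ?_)
  simp [← mul_assoc, ← exp_add]

theorem integrableOn_one_div_exp_mul_sqrt_sub_one {c : ℝ} (hc : 0 < c) :
    IntegrableOn (fun x ↦ 1 / (rexp (c * √x) - 1)) (Ioi 0) := by
  have hdom := (integrableOn_rpow_mul_exp_neg_mul_rpow (s := -(1 / 2)) (p := 1 / 2) (b := c / 2)
    (by norm_num) (by norm_num) (by positivity)).const_mul (1 / c)
  refine hdom.mono' (by measurability) (ae_restrict_of_forall_mem measurableSet_Ioi fun x hx ↦ ?_)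
  have hy : 0 < c * √x := mul_pos hc (sqrt_pos.2 hx)
  have hsinh : c * √x * rexp (c * √x / 2) ≤ rexp (c * √x) - 1 := by
    have h := self_le_sinh_iff.2 (half_pos hy).le
    rw [sinh_eq, div_le_div_iff_of_pos_right two_pos] at h
    calc c * √x * rexp (c * √x / 2)
        ≤ (rexp (c * √x / 2) - rexp (-(c * √x / 2))) * rexp (c * √x / 2) := by gcongr
      _ = rexp (c * √x) - 1 := by
        rw [sub_mul, ← exp_add, ← exp_add, add_halves, neg_add_cancel, exp_zero]
  rw [norm_of_nonneg (one_div_nonneg.2 ((by positivity : (0:ℝ) ≤ _).trans hsinh))]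
  calc 1 / (rexp (c * √x) - 1)
      ≤ 1 / (c * √x * rexp (c * √x / 2)) := one_div_le_one_div_of_le (by positivity) hsinh
    _ = 1 / c * (x ^ (-(1 / 2) : ℝ) * rexp (-(c / 2) * x ^ (1 / 2 : ℝ))) := by
      rw [rpow_neg (le_of_lt hx), ← sqrt_eq_rpow, show -(c / 2) * √x = -(c * √x / 2) by ring,
        exp_neg]
      field_simp

/-! ### Half-integral moments of complex exponentials -/

theorem integrable_sq_mul_cexp_neg_mul_sq {b : ℂ} (hb : 0 < b.re) :
    Integrable fun t : ℝ ↦ (t : ℂ) ^ 2 * Complex.exp (-b * (t : ℂ) ^ 2) := by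
  refine (integrable_rpow_mul_exp_neg_mul_sq hb (s := 2) (by norm_num)).mono' (by fun_prop)
    (.of_forall fun t ↦ ?_)
  rw [norm_mul, norm_cexp_neg_mul_sq]
  simp

theorem integral_sq_mul_cexp_neg_mul_sq_Ioi {b : ℂ} (hb : 0 < b.re) :
    ∫ t in Ioi (0 : ℝ), (t : ℂ) ^ 2 * Complex.exp (-b * (t : ℂ) ^ 2) =
      (π / b) ^ (1 / 2 : ℂ) / (4 * b) := by
  have hb0 : b ≠ 0 := by
    rintro rfl
    simp at hb
  have hgauss := (integrable_cexp_neg_mul_sq hb).integrableOn (s := Ioi 0)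
  have hmoment :=
    ((integrable_sq_mul_cexp_neg_mul_sq hb).const_mul (2 * b)).integrableOn (s := Ioi 0)
  have hderiv (t : ℝ) : HasDerivAt (fun t : ℝ ↦ (t : ℂ) * Complex.exp (-b * (t : ℂ) ^ 2))
      (Complex.exp (-b * (t : ℂ) ^ 2) -
        2 * b * ((t : ℂ) ^ 2 * Complex.exp (-b * (t : ℂ) ^ 2))) t := by
    convert! ((hasDerivAt_id (t : ℂ)).mul
      ((hasDerivAt_pow 2 (t : ℂ)).const_mul (-b)).cexp).comp_ofReal using 1
    simp only [neg_mul, one_mul, id_eq, Nat.cast_ofNat, Nat.add_one_sub_one, pow_one, mul_neg]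
    ring
  have hparts := integral_Ioi_of_hasDerivAt_of_tendsto' (fun t _ ↦ hderiv t) (hgauss.sub hmoment)
    (tendsto_zero_of_hasDerivAt_of_integrableOn_Ioi (fun t _ ↦ hderiv t) (hgauss.sub hmoment)
      (integrable_mul_cexp_neg_mul_sq hb).integrableOn)
  rw [integral_sub hgauss hmoment, integral_const_mul, integral_gaussian_complex_Ioi hb,
    Complex.ofReal_zero, zero_mul, sub_zero, sub_eq_zero] at hparts
  rw [eq_div_iff (by simp [hb0])]
  linear_combination -2 * hparts

theorem integral_sqrt_mul_cexp_neg_mul_Ioi {b : ℂ} (hb : 0 < b.re) :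
    ∫ x in Ioi (0 : ℝ), (√x : ℂ) * Complex.exp (-b * x) = (π / b) ^ (1 / 2 : ℂ) / (2 * b) := by
  rw [← integral_comp_rpow_Ioi _ two_ne_zero]
  calc ∫ t in Ioi (0 : ℝ), (|2| * t ^ (2 - 1 : ℝ)) •
        ((√(t ^ (2 : ℝ)) : ℂ) * Complex.exp (-b * (t ^ (2 : ℝ) : ℝ)))
      = ∫ t in Ioi (0 : ℝ), 2 * ((t : ℂ) ^ 2 * Complex.exp (-b * (t : ℂ) ^ 2)) := by
        refine setIntegral_congr_fun measurableSet_Ioi fun t ht ↦ ?_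
        simp only [Nat.abs_ofNat, show (2 - 1 : ℝ) = 1 by norm_num, rpow_one, rpow_ofNat,
          sqrt_sq (le_of_lt ht), Complex.ofReal_pow, Complex.real_smul, Complex.ofReal_mul,
          Complex.ofReal_ofNat]
        ring
    _ = (π / b) ^ (1 / 2 : ℂ) / (2 * b) := by
        rw [integral_const_mul, integral_sq_mul_cexp_neg_mul_sq_Ioi hb]
        ring

theorem integral_sqrt_mul_cexp_neg_pi_mul_Ioi {b : ℂ} (hb : 0 < b.re) :
    ∫ x in Ioi (0 : ℝ), (√x : ℂ) * Complex.exp (-π * b * x) =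
      1 / (2 * π) * (1 / (b * b ^ (1 / 2 : ℂ))) := by
  have harg : b.arg ≠ π := Complex.slitPlane_arg_ne_pi (.inl hb)
  have hpi : (π : ℂ) ≠ 0 := by exact_mod_cast pi_ne_zero
  have h := integral_sqrt_mul_cexp_neg_mul_Ioi (b := π * b) (by simpa [pi_pos] using hb)
  rw [div_mul_cancel_left₀ hpi, Complex.inv_cpow _ _ harg, ← neg_mul] at h
  rw [h]
  field_simp

/-! ### Interchange of the integrals -/

theorem sqrt_mul_cexp_mul_thetaRemainder (a : ℂ) (x u : ℝ) :
    (√x : ℂ) * Complex.exp (-π * (u + a) * x) * thetaRemainder u =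
      √x * Complex.exp (-π * a * x) * (rexp (-π * x * u) * thetaRemainder u : ℝ) := by
  have hexp : Complex.exp (-π * (u + a) * x) =
      Complex.exp (-π * a * x) * Complex.exp (-π * x * u) := by
    rw [← Complex.exp_add]
    ring_nf
  rw [hexp]
  push_cast
  ring

theorem norm_cexp_neg_pi_mul_le_one {a : ℂ} (ha : 0 ≤ a.re) {x : ℝ} (hx : 0 ≤ x) :
    ‖Complex.exp (-π * a * x)‖ ≤ 1 := by
  rw [Complex.norm_exp, exp_le_one_iff, Complex.re_mul_ofReal, ← Complex.ofReal_neg,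
    Complex.re_ofReal_mul, neg_mul, neg_mul, neg_nonpos]
  positivity

theorem integrable_sqrt_mul_cexp_mul_thetaRemainder {a : ℂ} (ha : 0 ≤ a.re) :
    Integrable (Function.uncurry fun x u : ℝ ↦
        (√x : ℂ) * Complex.exp (-π * (u + a) * x) * thetaRemainder u)
      ((volume.restrict (Ioi 0)).prod (volume.restrict (Ioi 0))) := by
  have hmeas : AEStronglyMeasurable (Function.uncurry fun x u : ℝ ↦
      (√x : ℂ) * Complex.exp (-π * (u + a) * x) * thetaRemainder u)
      ((volume.restrict (Ioi 0)).prod (volume.restrict (Ioi 0))) :=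
    .mul (Continuous.aestronglyMeasurable (by fun_prop))
      (Complex.continuous_ofReal.comp_aestronglyMeasurable
        aestronglyMeasurable_thetaRemainder.comp_snd)
  have hnorm (x : ℝ) : ∀ u ∈ Ioi (0 : ℝ),
      ‖(√x : ℂ) * Complex.exp (-π * (u + a) * x) * thetaRemainder u‖ =
        √x * ‖Complex.exp (-π * a * x)‖ * (rexp (-π * x * u) * thetaRemainder u) := fun u hu ↦ by
    rw [sqrt_mul_cexp_mul_thetaRemainder, norm_mul, norm_mul,
      Complex.norm_of_nonneg (sqrt_nonneg x),
      Complex.norm_of_nonneg (mul_nonneg (exp_pos _).le (thetaRemainder_nonneg hu))]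
  refine (integrable_prod_iff hmeas).2 ⟨ae_restrict_of_forall_mem measurableSet_Ioi fun x hx ↦ ?_,
    ((integrableOn_one_div_exp_mul_sqrt_sub_one two_pi_pos).const_mul 2).mono'
      hmeas.norm.integral_prod_right' (ae_restrict_of_forall_mem measurableSet_Ioi fun x hx ↦ ?_)⟩
  · exact (((integrableOn_exp_mul_thetaRemainder hx).ofReal (𝕜 := ℂ)).const_mul
      (√x * Complex.exp (-π * a * x))).congr
        (.of_forall fun u ↦ (sqrt_mul_cexp_mul_thetaRemainder a x u).symm)
  · have hpos := exp_two_pi_mul_sqrt_sub_one_pos hx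
    have hsqrt : 0 < √x := sqrt_pos.2 hx
    rw [norm_of_nonneg (integral_nonneg fun _ ↦ norm_nonneg _)]
    calc ∫ u in Ioi (0 : ℝ), ‖(√x : ℂ) * Complex.exp (-π * (u + a) * x) * thetaRemainder u‖
        = ‖Complex.exp (-π * a * x)‖ * (2 * (1 / (rexp (2 * π * √x) - 1))) := by
          rw [setIntegral_congr_fun measurableSet_Ioi (hnorm x), integral_const_mul,
            integral_exp_mul_thetaRemainder hx]
          field_simp
      _ ≤ 2 * (1 / (rexp (2 * π * √x) - 1)) :=
          mul_le_of_le_one_left (by positivity) (norm_cexp_neg_pi_mul_le_one ha (le_of_lt hx))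

theorem integral_sqrt_mul_cexp_mul_thetaRemainder {a : ℂ} (ha : 0 ≤ a.re) {u : ℝ} (hu : 0 < u) :
    ∫ x in Ioi (0 : ℝ), (√x : ℂ) * Complex.exp (-π * (u + a) * x) * thetaRemainder u =
      1 / (2 * π) * (1 / ((u + a) * (u + a) ^ (1 / 2 : ℂ)) * thetaRemainder u) := by
  have hb : 0 < (u + a).re := by simpa using add_pos_of_pos_of_nonneg hu ha
  rw [integral_mul_const, integral_sqrt_mul_cexp_neg_pi_mul_Ioi hb, mul_assoc]

theorem integrableOn_one_div_mul_cpow_half_mul_thetaRemainder {a : ℂ} (ha : 0 ≤ a.re) :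
    IntegrableOn (fun u : ℝ ↦ 1 / ((u + a) * (u + a) ^ (1 / 2 : ℂ)) * thetaRemainder u)
      (Ioi 0) := by
  have h := (integrable_sqrt_mul_cexp_mul_thetaRemainder ha).integral_prod_right.const_mul
    (2 * π : ℂ)
  refine h.congr (ae_restrict_of_forall_mem measurableSet_Ioi fun u hu ↦ ?_)
  have hpi : (π : ℂ) ≠ 0 := by exact_mod_cast pi_ne_zero
  simp only [Function.uncurry_apply_pair]
  rw [integral_sqrt_mul_cexp_mul_thetaRemainder ha hu]
  field_simp

theorem integral_cexp_div_exp_sqrt_sub_one {a : ℂ} (ha : 0 ≤ a.re) :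
    ∫ x in Ioi (0 : ℝ), Complex.exp (-π * a * x) / (rexp (2 * π * √x) - 1 : ℝ) =
      1 / (4 * π) *
        ∫ u in Ioi (0 : ℝ), 1 / ((u + a) * (u + a) ^ (1 / 2 : ℂ)) * thetaRemainder u := by
  have hlaplace : ∀ x ∈ Ioi (0 : ℝ),
      Complex.exp (-π * a * x) / (rexp (2 * π * √x) - 1 : ℝ) = 1 / 2 *
        ∫ u in Ioi (0 : ℝ), (√x : ℂ) * Complex.exp (-π * (u + a) * x) * thetaRemainder u :=
    fun x hx ↦ by
      have hpos : ((rexp (2 * π * √x) - 1 : ℝ) : ℂ) ≠ 0 := by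
        exact_mod_cast (exp_two_pi_mul_sqrt_sub_one_pos hx).ne'
      have hsqrt : (√x : ℂ) ≠ 0 := by exact_mod_cast (sqrt_pos.2 hx).ne'
      simp_rw [sqrt_mul_cexp_mul_thetaRemainder]
      rw [integral_const_mul, integral_complex_ofReal, integral_exp_mul_thetaRemainder hx,
        Complex.ofReal_div, Complex.ofReal_mul]
      field_simp
      norm_num
  rw [setIntegral_congr_fun measurableSet_Ioi hlaplace, integral_const_mul,
    integral_integral_swap (integrable_sqrt_mul_cexp_mul_thetaRemainder ha),
    setIntegral_congr_fun measurableSet_Ioi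
      fun u hu ↦ integral_sqrt_mul_cexp_mul_thetaRemainder ha hu, integral_const_mul]
  ring

/-! ### Integrals over the ray `u + a` -/

theorem norm_le_norm_ofReal_add {a : ℂ} (ha : 0 ≤ a.re) {u : ℝ} (hu : 0 ≤ u) : ‖a‖ ≤ ‖u + a‖ := by
  rw [Complex.norm_def, Complex.norm_def]
  refine sqrt_le_sqrt ?_
  simp only [Complex.normSq_apply, Complex.add_re, Complex.add_im, Complex.ofReal_re,
    Complex.ofReal_im, zero_add]
  nlinarith [mul_nonneg hu ha]

theorem le_norm_ofReal_add {a : ℂ} (ha : 0 ≤ a.re) (u : ℝ) : u ≤ ‖u + a‖ :=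
  calc u ≤ (u + a).re := by simpa using ha
    _ ≤ ‖u + a‖ := Complex.re_le_norm _

theorem ofReal_add_ne_zero {a : ℂ} (ha : 0 ≤ a.re) (ha0 : a ≠ 0) {u : ℝ} (hu : 0 ≤ u) :
    (u + a : ℂ) ≠ 0 :=
  norm_pos_iff.1 ((norm_pos_iff.2 ha0).trans_le (norm_le_norm_ofReal_add ha hu))

theorem integrableOn_rpow_mul_norm_ofReal_add_rpow {a : ℂ} (ha : 0 ≤ a.re) (ha0 : a ≠ 0)
    {s q : ℝ} (hs : s < 1) (hsq : 1 < s + q) (hq : 0 ≤ q) :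
    IntegrableOn (fun u : ℝ ↦ u ^ (-s) * ‖(u + a : ℂ)‖ ^ (-q)) (Ioi 0) := by
  have hmeas : Measurable fun u : ℝ ↦ u ^ (-s) * ‖(u + a : ℂ)‖ ^ (-q) := by fun_prop
  rw [← Ioc_union_Ioi_eq_Ioi zero_le_one]
  refine .union ?_ ?_
  · have hdom : IntegrableOn (fun u : ℝ ↦ u ^ (-s) * ‖a‖ ^ (-q)) (Ioc 0 1) :=
      ((intervalIntegrable_iff_integrableOn_Ioc_of_le zero_le_one).1
        (intervalIntegral.intervalIntegrable_rpow' (neg_lt_neg hs))).mul_const _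
    refine hdom.mono' hmeas.aestronglyMeasurable
      (ae_restrict_of_forall_mem measurableSet_Ioc fun u ⟨hu, _⟩ ↦ ?_)
    rw [norm_of_nonneg (by positivity)]
    gcongr ?_ * ?_
    exact rpow_le_rpow_of_nonpos (norm_pos_iff.2 ha0) (norm_le_norm_ofReal_add ha hu.le)
      (neg_nonpos.2 hq)
  · have hdom : IntegrableOn (fun u : ℝ ↦ u ^ (-s - q)) (Ioi 1) :=
      integrableOn_Ioi_rpow_of_lt (by linarith) one_pos
    refine hdom.mono' hmeas.aestronglyMeasurable
      (ae_restrict_of_forall_mem measurableSet_Ioi fun u hu ↦ ?_)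
    have hu0 : 0 < u := one_pos.trans hu
    rw [norm_of_nonneg (by positivity), sub_eq_add_neg, rpow_add hu0]
    gcongr ?_ * ?_
    exact rpow_le_rpow_of_nonpos hu0 (le_norm_ofReal_add ha u) (neg_nonpos.2 hq)

theorem integrableOn_one_div_sq_ofReal_add {a : ℂ} (ha : 0 ≤ a.re) (ha0 : a ≠ 0) :
    IntegrableOn (fun u : ℝ ↦ 1 / (u + a : ℂ) ^ 2) (Ioi 0) := by
  refine (integrableOn_rpow_mul_norm_ofReal_add_rpow ha ha0 (s := 0) (q := 2) one_pos
    (by norm_num) zero_le_two).mono' (by measurability) (.of_forall fun u ↦ le_of_eq ?_)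
  rw [neg_zero, rpow_zero, one_mul, rpow_neg (norm_nonneg _), norm_div, norm_one, norm_pow,
    rpow_ofNat, one_div]

theorem norm_one_div_mul_cpow_half (b : ℂ) :
    ‖1 / (b * b ^ (1 / 2 : ℂ))‖ = ‖b‖ ^ (-(3 / 2) : ℝ) := by
  have hhalf : ‖b ^ (1 / 2 : ℂ)‖ = ‖b‖ ^ (1 / 2 : ℝ) := by
    simpa using Complex.norm_cpow_real b (1 / 2)
  rw [norm_div, norm_one, norm_mul, hhalf, rpow_neg (norm_nonneg _), one_div,
    ← rpow_one_add' (norm_nonneg _) (by norm_num)]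
  norm_num

theorem integrableOn_one_div_mul_cpow_half_mul_rpow {a : ℂ} (ha : 0 ≤ a.re) (ha0 : a ≠ 0) :
    IntegrableOn (fun u : ℝ ↦ 1 / ((u + a) * (u + a) ^ (1 / 2 : ℂ)) * (1 / u ^ (1 / 2 : ℝ) : ℝ))
      (Ioi 0) := by
  refine (integrableOn_rpow_mul_norm_ofReal_add_rpow ha ha0 (s := 1 / 2) (q := 3 / 2)
    (by norm_num) (by norm_num) (by norm_num)).mono' (by measurability)
    (ae_restrict_of_forall_mem measurableSet_Ioi fun u hu ↦ le_of_eq ?_)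
  rw [norm_mul, norm_one_div_mul_cpow_half,
    Complex.norm_of_nonneg (one_div_nonneg.2 (rpow_nonneg (le_of_lt hu) _)),
    rpow_neg (le_of_lt hu), one_div (u ^ _), mul_comm]

theorem tendsto_one_div_ofReal_add (a : ℂ) :
    Filter.Tendsto (fun u : ℝ ↦ 1 / (u + a)) Filter.atTop (nhds 0) := by
  simpa [Function.comp_def] using Filter.tendsto_inv₀_cobounded.comp
    ((tendsto_add_const_cobounded a).comp (RCLike.tendsto_ofReal_atTop_cobounded ℂ))

theorem hasDerivAt_one_div_ofReal_add {a : ℂ} {u : ℝ} (hb : (u + a : ℂ) ≠ 0) :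
    HasDerivAt (fun u : ℝ ↦ 1 / (u + a : ℂ)) (-1 / (u + a) ^ 2) u := by
  simp only [one_div]
  exact ((hasDerivAt_id u).ofReal_comp.add_const a).fun_inv hb

theorem integral_one_div_sq_ofReal_add {a : ℂ} (ha : 0 ≤ a.re) (ha0 : a ≠ 0) :
    ∫ u in Ioi (0 : ℝ), 1 / (u + a : ℂ) ^ 2 = 1 / a := by
  have hderiv : ∀ u ∈ Ici (0 : ℝ),
      HasDerivAt (fun u : ℝ ↦ -(1 / (u + a) : ℂ)) (1 / (u + a) ^ 2) u := fun u hu ↦ by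
    convert! (hasDerivAt_one_div_ofReal_add (ofReal_add_ne_zero ha ha0 hu)).neg using 1
    ring
  have h := integral_Ioi_of_hasDerivAt_of_tendsto' hderiv
    (integrableOn_one_div_sq_ofReal_add ha ha0) (tendsto_one_div_ofReal_add a).neg
  simpa using h

theorem exp_neg_le_rpow_neg {y p : ℝ} (hy : 0 < y) (hp : 0 ≤ p) (hp1 : p ≤ 1) :
    rexp (-y) ≤ y ^ (-p) := by
  rw [exp_neg, rpow_neg hy.le]
  refine inv_anti₀ (by positivity) ?_
  rcases le_total y 1 with h | h
  · exact (rpow_le_one hy.le h hp).trans (one_le_exp hy.le)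
  · calc y ^ p ≤ y := rpow_le_self_of_one_le h hp1
      _ ≤ rexp y := (lt_add_one y).le.trans (add_one_le_exp y)

theorem norm_cexp_neg_div_le {a : ℂ} (ha : 0 ≤ a.re) {c : ℝ} (hc : 0 ≤ c) (u : ℝ) :
    ‖Complex.exp (-c / (u + a))‖ ≤ rexp (-(c * (u / ‖(u + a : ℂ)‖ ^ 2))) := by
  rw [Complex.norm_exp, exp_le_exp, neg_div, Complex.neg_re, neg_le_neg_iff,
    div_eq_mul_inv (c : ℂ), Complex.re_ofReal_mul, Complex.inv_re, Complex.normSq_eq_norm_sq]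
  gcongr
  simpa using ha

/- Any exponent strictly between `1/2` and `1` would do in place of `3/4`: it has to make the bound
summable over `c = π k²` and integrable at `u = 0`. -/
theorem norm_cexp_neg_div_div_sq_le {a : ℂ} (ha : 0 ≤ a.re) (ha0 : a ≠ 0) {c : ℝ} (hc : 0 < c)
    {u : ℝ} (hu : 0 < u) :
    ‖Complex.exp (-c / (u + a)) / (u + a) ^ 2‖ ≤
      c ^ (-(3 / 4) : ℝ) * (u ^ (-(3 / 4) : ℝ) * ‖(u + a : ℂ)‖ ^ (-(1 / 2) : ℝ)) := by
  have hb : 0 < ‖(u + a : ℂ)‖ := norm_pos_iff.2 (ofReal_add_ne_zero ha ha0 hu.le)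
  rw [norm_div, norm_pow]
  calc ‖Complex.exp (-c / (u + a))‖ / ‖(u + a : ℂ)‖ ^ 2
      ≤ (c * (u / ‖(u + a : ℂ)‖ ^ 2)) ^ (-(3 / 4) : ℝ) / ‖(u + a : ℂ)‖ ^ 2 := by
        gcongr
        exact (norm_cexp_neg_div_le ha hc.le u).trans
          (exp_neg_le_rpow_neg (by positivity) (by norm_num) (by norm_num))
    _ = c ^ (-(3 / 4) : ℝ) * (u ^ (-(3 / 4) : ℝ) * ‖(u + a : ℂ)‖ ^ (-(1 / 2) : ℝ)) := by
        rw [mul_rpow hc.le (by positivity), div_rpow hu.le (by positivity), ← rpow_natCast,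
          ← rpow_mul hb.le, mul_div_assoc, div_div, ← rpow_add hb, div_eq_mul_inv (u ^ _),
          ← rpow_neg hb.le]
        norm_num

theorem integrableOn_cexp_neg_div_div_sq {a : ℂ} (ha : 0 ≤ a.re) (ha0 : a ≠ 0) {c : ℝ}
    (hc : 0 ≤ c) :
    IntegrableOn (fun u : ℝ ↦ Complex.exp (-c / (u + a)) / (u + a) ^ 2) (Ioi 0) := by
  have hmeas : Measurable fun u : ℝ ↦ Complex.exp (-c / (u + a)) / (u + a) ^ 2 := by fun_prop
  refine (integrableOn_one_div_sq_ofReal_add ha ha0).norm.mono' hmeas.aestronglyMeasurable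
    (ae_restrict_of_forall_mem measurableSet_Ioi fun u hu ↦ ?_)
  rw [norm_div, norm_div, norm_one]
  gcongr
  refine (norm_cexp_neg_div_le ha hc u).trans (exp_le_one_iff.2 (neg_nonpos.2 ?_))
  have hu0 : 0 < u := hu
  positivity

theorem integral_cexp_neg_div_div_sq {a : ℂ} (ha : 0 ≤ a.re) (ha0 : a ≠ 0) {c : ℝ}
    (hc : 0 < c) :
    ∫ u in Ioi (0 : ℝ), Complex.exp (-c / (u + a)) / (u + a) ^ 2 =
      (1 - Complex.exp (-c / a)) / c := by
  have hc0 : (c : ℂ) ≠ 0 := by exact_mod_cast hc.ne'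
  have hderiv : ∀ u ∈ Ici (0 : ℝ), HasDerivAt (fun u : ℝ ↦ Complex.exp (-c * (1 / (u + a))) / c)
      (Complex.exp (-c / (u + a)) / (u + a) ^ 2) u := fun u hu ↦ by
    convert! (((hasDerivAt_one_div_ofReal_add (ofReal_add_ne_zero ha ha0 hu)).const_mul
      (-c : ℂ)).cexp).div_const (c : ℂ) using 1
    field_simp
  have h := integral_Ioi_of_hasDerivAt_of_tendsto' hderiv
    (integrableOn_cexp_neg_div_div_sq ha ha0 hc.le)
    (((tendsto_one_div_ofReal_add a).const_mul (-c : ℂ)).cexp.div_const (c : ℂ))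
  simpa [sub_div, ← div_eq_mul_inv] using h

theorem hasSum_integral_cexp_neg_div_div_sq {a : ℂ} (ha : 0 ≤ a.re) (ha0 : a ≠ 0) :
    HasSum (fun k : ℤ ↦ ∫ u in Ioi (0 : ℝ),
        Complex.exp (-(π * (k : ℝ) ^ 2 : ℝ) / (u + a)) / (u + a) ^ 2)
      (∫ u in Ioi (0 : ℝ), ∑' k : ℤ,
        Complex.exp (-(π * (k : ℝ) ^ 2 : ℝ) / (u + a)) / (u + a) ^ 2) := by
  have hint (k : ℤ) := integrableOn_cexp_neg_div_div_sq ha ha0 (c := π * (k : ℝ) ^ 2)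
    (by positivity)
  have hmajor := integrableOn_rpow_mul_norm_ofReal_add_rpow ha ha0 (s := 3 / 4) (q := 1 / 2)
    (by norm_num) (by norm_num) (by norm_num)
  refine hasSum_integral_of_summable_integral_norm hint (.of_norm_bounded_eventually
    (((summable_abs_int_rpow (b := 3 / 2) (by norm_num)).mul_left (π ^ (-(3 / 4) : ℝ))).mul_right
      (∫ u in Ioi (0 : ℝ), u ^ (-(3 / 4) : ℝ) * ‖(u + a : ℂ)‖ ^ (-(1 / 2) : ℝ))) ?_)
  filter_upwards [(finite_singleton (0 : ℤ)).eventually_cofinite_notMem] with k hk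
  have hk0 : (k : ℝ) ≠ 0 := by exact_mod_cast hk
  have hrpow : (π * (k : ℝ) ^ 2) ^ (-(3 / 4) : ℝ) =
      π ^ (-(3 / 4) : ℝ) * |(k : ℝ)| ^ (-(3 / 2) : ℝ) := by
    rw [mul_rpow pi_pos.le (sq_nonneg _), ← sq_abs, ← rpow_natCast, ← rpow_mul (abs_nonneg _)]
    norm_num
  rw [norm_of_nonneg (integral_nonneg fun _ ↦ norm_nonneg _), ← hrpow, ← integral_const_mul]
  exact setIntegral_mono_on (hint k).norm (hmajor.const_mul _) measurableSet_Ioi fun u hu ↦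
    norm_cexp_neg_div_div_sq_le ha ha0 (by positivity) hu

theorem cpow_half_mul_cpow_half (z : ℂ) : z ^ (1 / 2 : ℂ) * z ^ (1 / 2 : ℂ) = z := by
  rw [← sq, one_div]
  exact_mod_cast Complex.cpow_nat_inv_pow z two_ne_zero

theorem ofReal_mul_cpow {u : ℝ} (hu : 0 < u) {w : ℂ} (hw : w ≠ 0) (r : ℂ) :
    ((u : ℂ) * w) ^ r = (u : ℂ) ^ r * w ^ r := by
  have hu0 : (u : ℂ) ≠ 0 := by exact_mod_cast hu.ne'
  rw [Complex.cpow_def_of_ne_zero (mul_ne_zero hu0 hw), Complex.log_ofReal_mul hu hw,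
    Complex.ofReal_log hu.le, add_mul, Complex.exp_add, ← Complex.cpow_def_of_ne_zero hu0,
    ← Complex.cpow_def_of_ne_zero hw]

theorem ofReal_add_mem_slitPlane {a : ℂ} (ha : 0 ≤ a.re) {u : ℝ} (hu : 0 < u) :
    (u + a : ℂ) ∈ Complex.slitPlane :=
  .inl (by simpa using add_pos_of_pos_of_nonneg hu ha)

theorem one_sub_mul_one_div_ofReal_add {a : ℂ} {u : ℝ} (hb : (u + a : ℂ) ≠ 0) :
    1 - a * (1 / (u + a)) = u * (u + a)⁻¹ := by
  field_simp
  ring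

/- The antiderivative is `2 / a * (u / (u + a)) ^ (1/2)`, in a form whose limits at `0` and `∞` are
read off from those of `1 / (u + a)`. -/
theorem hasDerivAt_one_sub_mul_one_div_ofReal_add_cpow_half {a : ℂ} (ha : 0 ≤ a.re) (ha0 : a ≠ 0)
    {u : ℝ} (hu : 0 < u) :
    HasDerivAt (fun u : ℝ ↦ 2 / a * (1 - a * (1 / (u + a))) ^ (1 / 2 : ℂ))
      (1 / ((u + a) * (u + a) ^ (1 / 2 : ℂ)) * (1 / u ^ (1 / 2 : ℝ) : ℝ)) u := by
  have hb := ofReal_add_ne_zero ha ha0 hu.le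
  have hu0 : (u : ℂ) ≠ 0 := by exact_mod_cast hu.ne'
  have hslit : 1 - a * (1 / (u + a)) ∈ Complex.slitPlane := by
    rw [one_sub_mul_one_div_ofReal_add hb]
    refine .inl ?_
    rw [Complex.re_ofReal_mul, Complex.inv_re]
    have hnorm := Complex.normSq_pos.2 hb
    have hre : 0 < (u + a : ℂ).re := by simpa using add_pos_of_pos_of_nonneg hu ha
    positivity
  have hsqrt : (1 - a * (1 / (u + a))) ^ (1 / 2 - 1 : ℂ) =
      (u + a) ^ (1 / 2 : ℂ) / (u : ℂ) ^ (1 / 2 : ℂ) := by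
    rw [one_sub_mul_one_div_ofReal_add hb, ofReal_mul_cpow hu (inv_ne_zero hb),
      Complex.inv_cpow _ _ (Complex.slitPlane_arg_ne_pi (ofReal_add_mem_slitPlane ha hu)),
      ← Complex.cpow_neg, show (1 / 2 - 1 : ℂ) = -(1 / 2) by norm_num, neg_neg, Complex.cpow_neg,
      inv_mul_eq_div]
  have hcusp : ((1 / u ^ (1 / 2 : ℝ) : ℝ) : ℂ) = 1 / (u : ℂ) ^ (1 / 2 : ℂ) := by
    rw [Complex.ofReal_div, Complex.ofReal_cpow hu.le]
    norm_num
  convert! ((Complex.hasStrictDerivAt_cpow_const (c := 1 / 2) hslit).hasDerivAt.comp u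
    (((hasDerivAt_one_div_ofReal_add hb).const_mul a).const_sub 1)).const_mul (2 / a) using 1
  have hb_half : (u + a : ℂ) ^ (1 / 2 : ℂ) ≠ 0 := Complex.cpow_ne_zero_iff.2 (.inl hb)
  have hu_half : (u : ℂ) ^ (1 / 2 : ℂ) ≠ 0 := Complex.cpow_ne_zero_iff.2 (.inl hu0)
  rw [hsqrt, hcusp]
  field_simp
  linear_combination -cpow_half_mul_cpow_half (u + a : ℂ)

theorem integral_one_div_mul_cpow_half_mul_rpow {a : ℂ} (ha : 0 ≤ a.re) (ha0 : a ≠ 0) :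
    ∫ u in Ioi (0 : ℝ), 1 / ((u + a) * (u + a) ^ (1 / 2 : ℂ)) * (1 / u ^ (1 / 2 : ℝ) : ℝ) =
      2 / a := by
  have hcpow {z : ℂ} (hz : 0 ≤ z.re) : ContinuousAt (fun w : ℂ ↦ w ^ (1 / 2 : ℂ)) z :=
    Complex.continuousAt_cpow_const_of_re_pos (.inl hz) (by norm_num)
  have hcont : ContinuousAt (fun u : ℝ ↦ 2 / a * (1 - a * (1 / (u + a))) ^ (1 / 2 : ℂ)) 0 := by
    refine .const_mul (ContinuousAt.comp (f := fun u : ℝ ↦ 1 - a * (1 / (u + a))) (hcpow ?_)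
      ?_) (2 / a)
    · simp [ha0]
    · exact ((hasDerivAt_one_div_ofReal_add (ofReal_add_ne_zero ha ha0 le_rfl)).const_mul
        a).const_sub 1 |>.continuousAt
  have hlim : Filter.Tendsto (fun u : ℝ ↦ 2 / a * (1 - a * (1 / (u + a))) ^ (1 / 2 : ℂ))
      Filter.atTop (nhds (2 / a)) := by
    have hone : Filter.Tendsto (fun u : ℝ ↦ 1 - a * (1 / (u + a))) Filter.atTop (nhds 1) := by
      simpa using (tendsto_one_div_ofReal_add a).const_mul a |>.const_sub 1
    simpa [Function.comp_def] using ((hcpow (z := 1) (by simp)).tendsto.comp hone).const_mul (2 / a)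
  have h := integral_Ioi_of_hasDerivAt_of_tendsto hcont.continuousWithinAt
    (fun u hu ↦ hasDerivAt_one_sub_mul_one_div_ofReal_add_cpow_half ha ha0 hu)
    (integrableOn_one_div_mul_cpow_half_mul_rpow ha ha0) hlim
  simpa [ha0] using h

/-! ### Transformation of the theta series -/

theorem tsum_exp_neg_pi_mul_sq_eq {u : ℝ} (hu : 0 < u) (r : ℤ) :
    (∑' k : ℤ, rexp (-π * u * (k : ℝ) ^ 2) : ℝ) =
      1 / (u + 2 * r * Complex.I) ^ (1 / 2 : ℂ) *
        ∑' k : ℤ, Complex.exp (-(π * (k : ℝ) ^ 2 : ℝ) / (u + 2 * r * Complex.I)) := by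
  have hre : 0 < (u + 2 * r * Complex.I).re := by simpa using hu
  have hperiod (k : ℤ) : (rexp (-π * u * (k : ℝ) ^ 2) : ℂ) =
      Complex.exp (-π * (u + 2 * r * Complex.I) * (k : ℂ) ^ 2) := by
    rw [Complex.ofReal_exp, Complex.exp_eq_exp_iff_exists_int]
    refine ⟨r * k ^ 2, ?_⟩
    push_cast
    ring
  simp_rw [Complex.ofReal_tsum, hperiod, Complex.tsum_exp_neg_mul_int_sq hre]
  congr! 4 with k
  push_cast
  ring

theorem tsum_cexp_neg_div_div_sq_eq {r : ℤ} {u : ℝ} (hu : 0 < u) :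
    ∑' k : ℤ, Complex.exp (-(π * (k : ℝ) ^ 2 : ℝ) / (u + 2 * r * Complex.I)) /
        (u + 2 * r * Complex.I) ^ 2 =
      1 / ((u + 2 * r * Complex.I) * (u + 2 * r * Complex.I) ^ (1 / 2 : ℂ)) *
          thetaRemainder u +
        1 / ((u + 2 * r * Complex.I) * (u + 2 * r * Complex.I) ^ (1 / 2 : ℂ)) *
          (1 / u ^ (1 / 2 : ℝ) : ℝ) := by
  have hsq := cpow_half_mul_cpow_half (u + 2 * r * Complex.I)
  rw [← mul_add, ← Complex.ofReal_add, thetaRemainder, sub_add_cancel,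
    tsum_exp_neg_pi_mul_sq_eq hu r, tsum_div_const, one_div_mul_eq_div, one_div_mul_eq_div,
    div_div]
  congr 1
  linear_combination (-(u + 2 * r * Complex.I)) * hsq


theorem integral_tsum_cexp_neg_div_div_sq {r : ℤ} (hr : r ≠ 0) :
    ∫ u in Ioi (0 : ℝ), ∑' k : ℤ,
        Complex.exp (-(π * (k : ℝ) ^ 2 : ℝ) / (u + 2 * r * Complex.I)) /
          (u + 2 * r * Complex.I) ^ 2 =
      (4 * π) * (∫ x in Ioi (0 : ℝ),
          Complex.exp (-π * (2 * r * Complex.I) * x) / (rexp (2 * π * √x) - 1 : ℝ)) +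
        2 / (2 * r * Complex.I) := by
  have hre : 0 ≤ (2 * r * Complex.I).re := by simp
  have hne : 2 * r * Complex.I ≠ 0 := by simpa using hr
  have hpi : (π : ℂ) ≠ 0 := by exact_mod_cast pi_ne_zero
  rw [setIntegral_congr_fun measurableSet_Ioi fun u hu ↦ tsum_cexp_neg_div_div_sq_eq hu,
    integral_add (integrableOn_one_div_mul_cpow_half_mul_thetaRemainder hre)
      (integrableOn_one_div_mul_cpow_half_mul_rpow hre hne),
    integral_one_div_mul_cpow_half_mul_rpow hre hne, integral_cexp_div_exp_sqrt_sub_one hre]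
  field_simp

theorem re_integral_cexp_neg_div_div_sq {r : ℤ} (hr : r ≠ 0) (k : ℤ) :
    (∫ u in Ioi (0 : ℝ), Complex.exp (-(π * (k : ℝ) ^ 2 : ℝ) / (u + 2 * r * Complex.I)) /
        (u + 2 * r * Complex.I) ^ 2).re =
      (1 - cos (π * (k : ℝ) ^ 2 / (2 * r))) / (π * (k : ℝ) ^ 2) := by
  have hre : 0 ≤ (2 * r * Complex.I).re := by simp
  have hne : 2 * r * Complex.I ≠ 0 := by simpa using hr
  rcases eq_or_ne k 0 with rfl | hk
  · simpa using congrArg Complex.re (integral_one_div_sq_ofReal_add hre hne)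
  · have hr0 : (r : ℂ) ≠ 0 := by exact_mod_cast hr
    have hphase : -(π * (k : ℝ) ^ 2 : ℝ) / (2 * r * Complex.I) =
        (π * (k : ℝ) ^ 2 / (2 * r) : ℝ) * Complex.I := by
      push_cast
      field_simp
      rw [Complex.I_sq]
    rw [integral_cexp_neg_div_div_sq hre hne (by positivity), Complex.div_ofReal_re, hphase,
      Complex.sub_re, Complex.one_re, Complex.exp_ofReal_mul_I_re]

theorem integrableOn_cexp_div_exp_sqrt_sub_one {a : ℂ} (ha : 0 ≤ a.re) :
    IntegrableOn
      (fun x : ℝ ↦ Complex.exp (-π * a * x) / (rexp (2 * π * √x) - 1 : ℝ)) (Ioi 0) := by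
  have hmeas : Measurable fun x : ℝ ↦
      Complex.exp (-π * a * x) / (rexp (2 * π * √x) - 1 : ℝ) := by fun_prop
  refine (integrableOn_one_div_exp_mul_sqrt_sub_one two_pi_pos).mono' hmeas.aestronglyMeasurable
    (ae_restrict_of_forall_mem measurableSet_Ioi fun x hx ↦ ?_)
  have hpos := exp_two_pi_mul_sqrt_sub_one_pos hx
  rw [norm_div, Complex.norm_of_nonneg hpos.le]
  gcongr
  exact norm_cexp_neg_pi_mul_le_one ha (le_of_lt hx)

theorem re_cexp_div_exp_sqrt_sub_one (n x : ℝ) :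
    (Complex.exp (-π * (n * Complex.I) * x) / (rexp (2 * π * √x) - 1 : ℝ)).re =
      cos (n * π * x) / (rexp (2 * π * √x) - 1) := by
  have hphase : -π * (n * Complex.I) * x = (-(n * π * x) : ℝ) * Complex.I := by
    push_cast
    ring
  rw [Complex.div_ofReal_re, hphase, Complex.exp_ofReal_mul_I_re, cos_neg]

theorem integrableOn_cos_div_exp_sqrt_sub_one (n : ℝ) :
    IntegrableOn (fun x ↦ cos (n * π * x) / (rexp (2 * π * √x) - 1)) (Ioi 0) := by
  have h := (integrableOn_cexp_div_exp_sqrt_sub_one (a := n * Complex.I) (by simp)).re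
  simpa only [RCLike.re_eq_complex_re, re_cexp_div_exp_sqrt_sub_one, IntegrableOn] using h

theorem re_integral_cexp_div_exp_sqrt_sub_one (n : ℝ) :
    (∫ x in Ioi (0 : ℝ),
        Complex.exp (-π * (n * Complex.I) * x) / (rexp (2 * π * √x) - 1 : ℝ)).re =
      ∫ x in Ioi (0 : ℝ), cos (n * π * x) / (rexp (2 * π * √x) - 1) := by
  have h := integral_re (𝕜 := ℂ)
    (integrableOn_cexp_div_exp_sqrt_sub_one (a := n * Complex.I) (by simp))
  simpa only [RCLike.re_eq_complex_re, re_cexp_div_exp_sqrt_sub_one] using h.symm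

theorem hasSum_one_sub_cos_div_sq {r : ℤ} (hr : r ≠ 0) :
    HasSum (fun k : ℤ ↦ (1 - cos (π * (k : ℝ) ^ 2 / (2 * r))) / (π * (k : ℝ) ^ 2))
      (4 * π * ∫ x in Ioi (0 : ℝ), cos (2 * r * π * x) / (rexp (2 * π * √x) - 1)) := by
  have hre : 0 ≤ (2 * r * Complex.I).re := by simp
  have hne : 2 * r * Complex.I ≠ 0 := by simpa using hr
  have hsum := Complex.hasSum_re (hasSum_integral_cexp_neg_div_div_sq hre hne)
  have hfour : (4 * π : ℂ) = (4 * π : ℝ) := by push_cast; rfl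
  have hpole : (2 / (2 * r * Complex.I)).re = 0 := by simp [Complex.div_re]
  have hcos := re_integral_cexp_div_exp_sqrt_sub_one (2 * r)
  simp only [Complex.ofReal_mul, Complex.ofReal_ofNat, Complex.ofReal_intCast] at hcos
  simpa only [re_integral_cexp_neg_div_div_sq hr, integral_tsum_cexp_neg_div_div_sq hr,
    Complex.add_re, hfour, Complex.re_ofReal_mul, hcos, hpole, add_zero] using hsum

/-! ### The series for `r = 2` -/

theorem hasSum_one_div_sq_of_dvd {m : ℕ} (hm : m ≠ 0) :
    HasSum (fun n : ℕ ↦ if m ∣ n then 1 / (n : ℝ) ^ 2 else 0) (π ^ 2 / 6 / (m : ℝ) ^ 2) := by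
  have hinj : Function.Injective (m * ·) := mul_right_injective₀ hm
  refine (hinj.hasSum_iff fun n hn ↦ if_neg fun ⟨k, hk⟩ ↦ hn ⟨k, hk.symm⟩).1 ?_
  convert! hasSum_zeta_two.div_const ((m : ℝ) ^ 2) using 2 with n
  simp only [Function.comp_apply, dvd_mul_right, if_true, Nat.cast_mul]
  ring

theorem cos_pi_mul_four_mul_sq_div_four (m : ℕ) : cos (π * (4 * m : ℝ) ^ 2 / 4) = 1 := by
  have harg : π * (4 * m : ℝ) ^ 2 / 4 = (2 * m ^ 2 : ℕ) * (2 * π) := by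
    push_cast
    ring
  rw [harg, cos_nat_mul_two_pi]

theorem cos_pi_mul_four_mul_add_two_sq_div_four (m : ℕ) :
    cos (π * (4 * m + 2 : ℝ) ^ 2 / 4) = -1 := by
  have harg : π * (4 * m + 2 : ℝ) ^ 2 / 4 = π + (2 * m ^ 2 + 2 * m : ℕ) * (2 * π) := by
    push_cast
    ring
  rw [harg, cos_add_nat_mul_two_pi, cos_pi]

theorem cos_pi_mul_two_mul_add_one_sq_div_four (m : ℕ) :
    cos (π * (2 * m + 1 : ℝ) ^ 2 / 4) = √2 / 2 := by
  obtain ⟨j, hj⟩ : 2 ∣ m * (m + 1) := (Nat.even_mul_succ_self m).two_dvd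
  have hj' : (m : ℝ) * (m + 1) = 2 * j := by exact_mod_cast hj
  have harg : π * (2 * m + 1 : ℝ) ^ 2 / 4 = π / 4 + j * (2 * π) := by
    linear_combination π * hj'
  rw [harg, cos_add_nat_mul_two_pi, cos_pi_div_four]

theorem one_sub_cos_pi_mul_sq_div_four (n : ℕ) :
    1 - cos (π * (n : ℝ) ^ 2 / 4) =
      (1 - √2 / 2) + (1 + √2 / 2) * (if 2 ∣ n then 1 else 0) - 2 * (if 4 ∣ n then 1 else 0) := by
  by_cases h2 : 2 ∣ n
  · by_cases h4 : 4 ∣ n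
    · obtain ⟨m, rfl⟩ := h4
      rw [if_pos h2, if_pos ⟨m, rfl⟩]
      push_cast
      rw [cos_pi_mul_four_mul_sq_div_four]
      ring
    · obtain ⟨m, rfl⟩ : ∃ m, n = 4 * m + 2 := ⟨n / 4, by omega⟩
      rw [if_pos h2, if_neg h4]
      push_cast
      rw [cos_pi_mul_four_mul_add_two_sq_div_four]
      ring
  · obtain ⟨m, rfl⟩ : ∃ m, n = 2 * m + 1 := ⟨n / 2, by omega⟩
    rw [if_neg h2, if_neg (by omega)]
    push_cast
    rw [cos_pi_mul_two_mul_add_one_sq_div_four]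
    ring

theorem hasSum_nat_one_sub_cos_pi_mul_sq_div_four_div_sq :
    HasSum (fun n : ℕ ↦ (1 - cos (π * (n : ℝ) ^ 2 / 4)) / (π * (n : ℝ) ^ 2))
      (π * (3 - √2) / 16) := by
  have h := (((hasSum_zeta_two.mul_left (1 - √2 / 2)).add
    ((hasSum_one_div_sq_of_dvd two_ne_zero).mul_left (1 + √2 / 2))).sub
      ((hasSum_one_div_sq_of_dvd four_ne_zero).mul_left 2)).div_const π
  convert! h using 1
  · ext n
    rw [one_sub_cos_pi_mul_sq_div_four]
    split_ifs <;> ring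
  · push_cast
    field_simp
    ring

theorem hasSum_int_one_sub_cos_pi_mul_sq_div_four_div_sq :
    HasSum (fun k : ℤ ↦ (1 - cos (π * (k : ℝ) ^ 2 / 4)) / (π * (k : ℝ) ^ 2))
      (π * (3 - √2) / 8) := by
  have h := hasSum_nat_one_sub_cos_pi_mul_sq_div_four_div_sq
  convert! HasSum.of_nat_of_neg
    (f := fun k : ℤ ↦ (1 - cos (π * (k : ℝ) ^ 2 / 4)) / (π * (k : ℝ) ^ 2))
    (by simpa using h) (by simpa using h) using 1
  simp only [Int.cast_zero, ne_eq, OfNat.ofNat_ne_zero, not_false_eq_true, zero_pow, mul_zero,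
    zero_div, cos_zero, sub_self, div_zero, sub_zero]
  ring

/-- Ramanujan's integral `R_C(0, 4)` converges and equals `(3 - √2)/32`. -/
theorem ramanujan_RC_zero_four :
    IntegrableOn
      (fun x : ℝ => Real.cos (4 * π * x) / (Real.exp (2 * π * Real.sqrt x) - 1)) (Ioi 0) ∧
    (∫ x in Ioi (0:ℝ), Real.cos (4 * π * x) / (Real.exp (2 * π * Real.sqrt x) - 1)) =
      (3 - Real.sqrt 2) / 32 := by
  have hsum := hasSum_one_sub_cos_div_sq (r := 2) two_ne_zero
  rw [show (2 * (2 : ℤ) : ℝ) = 4 by norm_num] at hsum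
  have heval := hsum.unique hasSum_int_one_sub_cos_pi_mul_sq_div_four_div_sq
  refine ⟨integrableOn_cos_div_exp_sqrt_sub_one 4, ?_⟩
  refine mul_left_cancel₀ (mul_ne_zero four_ne_zero pi_ne_zero) (heval.trans ?_)
  ring
end

section
/- The integral R_C(0, 6) = ∫_0^∞ cos(6πx)/(exp(2π√x) − 1) dx converges and equals (13 − 4√3)/144. -/
open MeasureTheory Real Set
open Filter Topology Asymptotics
open Complex (I)
open scoped Complex

/-!
For even `n > 0` the zeros of `sinh (πnz)` are the points `mi / n` with `m` an integer. There
`exp (πn(iz² + z))` agrees with the Gauss-weighted average of the functions `cosh (π(n - 2k)z)`,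
`0 ≤ k < n`, so the difference of the two divided by `2 sinh (πnz)` is an entire function `B`. It
satisfies `B z + B (-z) = exp (πinz²)` and `B (i - z) = -B z`.

Consequently its derivative `D` is symmetric about `i / 2` and `D x - D (-x) = 2πinx exp (πinx²)`.
Integrating `(D z - D 0) / (exp (2πz) - 1)` around the half-strip `0 ≤ im z ≤ 1`, `re z ≥ 0`,
therefore evaluates `∫ 2πinx exp (πinx²) / (exp (2πx) - 1)` in terms of `D 0`, which involves only
the second moment of the Gauss weights. The substitution of `x²` for the variable of integration
and real parts give the cosine integral.
-/

/-! ### Removable singularities of quotients -/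

theorem dslope_div_dslope_of_ne {f g : ℂ → ℂ} {a z : ℂ} (hf : f a = 0) (hg : g a = 0)
    (hz : z ≠ a) : dslope f a z / dslope g a z = f z / g z := by
  rw [dslope_of_ne f hz, dslope_of_ne g hz, slope_def_field, slope_def_field, hf, hg, sub_zero,
    sub_zero, div_div_div_cancel_right₀ (sub_ne_zero.2 hz)]

theorem exists_differentiableOn_mul_eq {f g : ℂ → ℂ} {U : Set ℂ} (hU : IsOpen U)
    (hf : DifferentiableOn ℂ f U) (hg : DifferentiableOn ℂ g U)
    (h : ∀ z ∈ U, g z = 0 → f z = 0 ∧ deriv g z ≠ 0) :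
    ∃ q : ℂ → ℂ, DifferentiableOn ℂ q U ∧ ∀ z ∈ U, q z * g z = f z := by
  classical
  refine ⟨fun z ↦ if g z = 0 then deriv f z / deriv g z else f z / g z, fun a ha ↦ ?_,
    fun z hz ↦ ?_⟩
  · refine DifferentiableAt.differentiableWithinAt ?_
    have hUa : U ∈ 𝓝 a := hU.mem_nhds ha
    by_cases hga : g a = 0
    · obtain ⟨hfa, hg'a⟩ := h a ha hga
      have hdf := ((Complex.differentiableOn_dslope hUa).2 hf).differentiableAt hUa
      have hdg := ((Complex.differentiableOn_dslope hUa).2 hg).differentiableAt hUa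
      have hne : dslope g a a ≠ 0 := by rwa [dslope_same]
      refine (hdf.fun_div hdg hne).congr_of_eventuallyEq ?_
      filter_upwards [hdg.continuousAt.eventually_ne hne] with z hz
      rcases eq_or_ne z a with rfl | hza
      · simp [hga]
      · have hgz : g z ≠ 0 := by
          rw [dslope_of_ne g hza, slope_def_field, hga, sub_zero] at hz
          exact (div_ne_zero_iff.1 hz).1
        rw [if_neg hgz, dslope_div_dslope_of_ne hfa hga hza]
    · have hga' := hg.differentiableAt hUa
      refine ((hf.differentiableAt hUa).fun_div hga' hga).congr_of_eventuallyEq ?_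
      filter_upwards [hga'.continuousAt.eventually_ne hga] with z hz
      rw [if_neg hz]
  · by_cases hgz : g z = 0
    · rw [hgz, mul_zero, (h z hz hgz).1]
    · simp only [if_neg hgz, div_mul_cancel₀ _ hgz]

/-! ### Growth in a half-strip -/

/-- The filter `re z → +∞` inside the strip `0 ≤ im z ≤ 1`, along which all growth conditions of
contour integrals over `[0, T] ×ℂ [0, 1]` are stated. -/
def stripAtTop : Filter ℂ := comap Complex.re atTop ⊓ 𝓟 (Complex.im ⁻¹' Icc 0 1)

theorem stripAtTop_le : stripAtTop ≤ comap Complex.re atTop := inf_le_left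

theorem tendsto_re_stripAtTop : Tendsto Complex.re stripAtTop atTop :=
  tendsto_comap.mono_left stripAtTop_le

theorem eventually_stripAtTop {p : ℂ → Prop} :
    (∀ᶠ z in stripAtTop, p z) ↔ ∀ᶠ T : ℝ in atTop, ∀ y ∈ Icc (0 : ℝ) 1, p (T + y * I) := by
  simp only [stripAtTop, eventually_inf_principal, eventually_comap, mem_preimage]
  refine eventually_congr (.of_forall fun T ↦ ⟨fun h y hy ↦ h _ (by simp) (by simpa using hy), ?_⟩)
  rintro h z rfl hz
  simpa [Complex.re_add_im] using h z.im hz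

theorem tendsto_stripAtTop {y : ℝ} (hy : y ∈ Icc (0 : ℝ) 1) :
    Tendsto (fun x : ℝ ↦ (x + y * I : ℂ)) atTop stripAtTop :=
  tendsto_iff_eventually.2 fun _ hp ↦ (eventually_stripAtTop.1 hp).mono fun _ hx ↦ hx y hy

theorem norm_cexp_ofReal_mul (a : ℝ) (z : ℂ) : ‖cexp (a * z)‖ = rexp (a * z.re) := by
  rw [Complex.norm_exp, Complex.re_ofReal_mul]

theorem isLittleO_cexp_mul {a b : ℝ} (h : a < b) :
    (fun z : ℂ ↦ cexp (a * z)) =o[comap Complex.re atTop] fun z ↦ cexp (b * z) := by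
  refine IsLittleO.of_norm_norm ?_
  simp only [norm_cexp_ofReal_mul, Real.isLittleO_exp_comp_exp_comp, ← sub_mul]
  exact tendsto_comap.const_mul_atTop (sub_pos.2 h)

theorem isBigO_cexp_mul {a b : ℝ} (h : a ≤ b) :
    (fun z : ℂ ↦ cexp (a * z)) =O[comap Complex.re atTop] fun z ↦ rexp (b * z.re) := by
  have : (fun z : ℂ ↦ cexp (b * z)) =O[comap Complex.re atTop] fun z ↦ rexp (b * z.re) :=
    .of_norm_left (by simpa only [norm_cexp_ofReal_mul] using isBigO_refl _ _)
  rcases h.eq_or_lt with rfl | h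
  exacts [this, (isLittleO_cexp_mul h).isBigO.trans this]

theorem isBigO_cosh_mul {a b : ℝ} (h : |a| ≤ b) :
    (fun z : ℂ ↦ Complex.cosh (a * z)) =O[comap Complex.re atTop] fun z ↦ rexp (b * z.re) := by
  have hneg := isBigO_cexp_mul ((neg_le_abs a).trans h)
  simp only [Complex.ofReal_neg, neg_mul] at hneg
  simpa only [Complex.cosh, div_eq_inv_mul] using
    ((isBigO_cexp_mul ((le_abs_self a).trans h)).add hneg).const_mul_left 2⁻¹

theorem isBigO_sinh_mul {a b : ℝ} (h : |a| ≤ b) :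
    (fun z : ℂ ↦ Complex.sinh (a * z)) =O[comap Complex.re atTop] fun z ↦ rexp (b * z.re) := by
  have hneg := isBigO_cexp_mul ((neg_le_abs a).trans h)
  simp only [Complex.ofReal_neg, neg_mul] at hneg
  simpa only [Complex.sinh, div_eq_inv_mul] using
    ((isBigO_cexp_mul ((le_abs_self a).trans h)).sub hneg).const_mul_left 2⁻¹

theorem isBigO_exp_re_cexp_sub {a b : ℝ} (h : a < b) :
    (fun z : ℂ ↦ rexp (b * z.re)) =O[comap Complex.re atTop]
      fun z ↦ cexp (b * z) - cexp (a * z) := by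
  refine .trans (.of_norm_left ?_) (isLittleO_cexp_mul h).right_isBigO_sub
  simpa only [← norm_cexp_ofReal_mul, norm_norm] using (isBigO_refl _ _).norm_left

theorem isBigO_of_mul_isBigO_mul {α : Type*} {l : Filter α} {q g : α → ℂ} {u v : α → ℝ}
    (hv : ∀ x, v x ≠ 0) (hg : v =O[l] g)
    (h : (fun x ↦ q x * g x) =O[l] fun x ↦ u x * v x) : q =O[l] u := by
  have hg0 : ∀ᶠ x in l, g x ≠ 0 := hg.eq_zero_imp.mono fun x hx hgx ↦ hv x (hx hgx)
  refine (h.mul (hg.inv_rev (.of_forall fun x hx ↦ absurd hx (hv x)))).congr' ?_ ?_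
  · filter_upwards [hg0] with x hx using mul_inv_cancel_right₀ hx _
  · exact .of_forall fun x ↦ mul_inv_cancel_right₀ (hv x) _

/-! ### Cauchy's theorem on a half-strip -/

section HalfStrip

variable {f : ℂ → ℂ} {b : ℝ}

theorem continuousOn_comp_horizontal (hf : ContinuousOn f (Ici 0 ×ℂ Icc 0 1)) {y : ℝ}
    (hy : y ∈ Icc (0 : ℝ) 1) : ContinuousOn (fun x : ℝ ↦ f (x + y * I)) (Ici 0) :=
  hf.comp (by fun_prop) fun x hx ↦ by simpa [Complex.mem_reProdIm] using And.intro hx hy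

theorem integrableOn_comp_horizontal (hf : ContinuousOn f (Ici 0 ×ℂ Icc 0 1)) (hb : 0 < b)
    (hO : f =O[stripAtTop] fun z ↦ rexp (-b * z.re)) {y : ℝ} (hy : y ∈ Icc (0 : ℝ) 1) :
    IntegrableOn (fun x : ℝ ↦ f (x + y * I)) (Ioi 0) := by
  have hcont := continuousOn_comp_horizontal hf hy
  refine (integrable_norm_iff ((hcont.mono Ioi_subset_Ici_self).aestronglyMeasurable
    measurableSet_Ioi)).1 (integrable_of_isBigO_exp_neg hb hcont.norm ?_)
  simpa [Function.comp_def] using (hO.comp_tendsto (tendsto_stripAtTop hy)).norm_left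

theorem tendsto_integral_vertical_zero (hb : 0 < b)
    (hO : f =O[stripAtTop] fun z ↦ rexp (-b * z.re)) :
    Tendsto (fun T : ℝ ↦ ∫ y in (0 : ℝ)..1, f (T + y * I)) atTop (𝓝 0) := by
  obtain ⟨C, hC⟩ := hO.bound
  have hlim : Tendsto (fun T : ℝ ↦ C * rexp (-b * T)) atTop (𝓝 0) := by
    simpa using (Real.tendsto_exp_atBot.comp
      (tendsto_id.const_mul_atTop_of_neg (neg_neg_of_pos hb))).const_mul C
  refine squeeze_zero_norm' ?_ hlim
  filter_upwards [eventually_stripAtTop.1 hC] with T hT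
  refine (intervalIntegral.norm_integral_le_of_norm_le_const (C := C * rexp (-b * T))
    fun y hy ↦ ?_).trans_eq (by simp)
  rw [uIoc_of_le zero_le_one] at hy
  simpa using hT y (Ioc_subset_Icc_self hy)

theorem integral_sub_comp_add_I (hf : DifferentiableOn ℂ f (Ici 0 ×ℂ Icc 0 1)) (hb : 0 < b)
    (hO : f =O[stripAtTop] fun z ↦ rexp (-b * z.re)) :
    IntegrableOn (fun x : ℝ ↦ f x - f (x + I)) (Ioi 0) ∧
      ∫ x in Ioi (0 : ℝ), (f x - f (x + I)) = I * ∫ y in (0 : ℝ)..1, f (y * I) := by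
  have hbot : IntegrableOn (fun x : ℝ ↦ f x) (Ioi 0) := by
    simpa using integrableOn_comp_horizontal hf.continuousOn hb hO (left_mem_Icc.2 zero_le_one)
  have htop : IntegrableOn (fun x : ℝ ↦ f (x + I)) (Ioi 0) := by
    simpa using integrableOn_comp_horizontal hf.continuousOn hb hO (right_mem_Icc.2 zero_le_one)
  refine ⟨hbot.sub htop, ?_⟩
  have hrect : ∀ T : ℝ, 0 ≤ T → (∫ x in (0 : ℝ)..T, f x) - (∫ x in (0 : ℝ)..T, f (x + I)) +
      I * (∫ y in (0 : ℝ)..1, f (T + y * I)) = I * ∫ y in (0 : ℝ)..1, f (y * I) := by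
    intro T hT
    have := Complex.integral_boundary_rect_eq_zero_of_differentiableOn f 0 (T + I) <| hf.mono <| by
      simpa [uIcc_of_le hT] using Complex.reProdIm_subset_iff.2
        (prod_mono Icc_subset_Ici_self Subset.rfl)
    simpa [sub_eq_zero] using this
  have hlim := ((intervalIntegral_tendsto_integral_Ioi 0 hbot tendsto_id).sub
    (intervalIntegral_tendsto_integral_Ioi 0 htop tendsto_id)).add
    ((tendsto_integral_vertical_zero hb hO).const_mul I)
  rw [integral_sub hbot htop]
  simpa using tendsto_nhds_unique hlim
    (tendsto_const_nhds.congr' ((eventually_ge_atTop 0).mono fun T hT ↦ (hrect T hT).symm))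

end HalfStrip

/-! ### A symmetric Abel–Plana formula -/

section AbelPlana

theorem two_pi_ne_zero : (2 * π : ℂ) ≠ 0 := by
  exact_mod_cast Real.two_pi_pos.ne'

theorem cexp_two_pi_mul_sub_one_eq_zero_iff {z : ℂ} :
    cexp (2 * π * z) - 1 = 0 ↔ ∃ m : ℤ, z = m * I := by
  rw [sub_eq_zero, Complex.exp_eq_one_iff]
  refine exists_congr fun m ↦ ?_
  rw [show (m * (2 * π * I) : ℂ) = 2 * π * (m * I) by ring]
  exact mul_right_inj' two_pi_ne_zero

theorem cexp_two_pi_mul_sub_one_ne_zero_of_re {z : ℂ} (hz : z.re ≠ 0) :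
    cexp (2 * π * z) - 1 ≠ 0 := by
  rintro h
  obtain ⟨m, rfl⟩ := cexp_two_pi_mul_sub_one_eq_zero_iff.1 h
  simp at hz

theorem cexp_two_pi_mul_sub_one_ne_zero_of_im {z : ℂ} (hz : z.im ∈ Ioo (0 : ℝ) 1) :
    cexp (2 * π * z) - 1 ≠ 0 := by
  rintro h
  obtain ⟨m, rfl⟩ := cexp_two_pi_mul_sub_one_eq_zero_iff.1 h
  simp only [Complex.mul_im, Complex.intCast_re, Complex.I_im, Complex.intCast_im, Complex.I_re,
    mul_one, mul_zero, add_zero, mem_Ioo] at hz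
  norm_cast at hz
  omega

theorem hasDerivAt_cexp_two_pi_mul_sub_one (z : ℂ) :
    HasDerivAt (fun z ↦ cexp (2 * π * z) - 1) (2 * π * cexp (2 * π * z)) z := by
  simpa [mul_comm] using ((hasDerivAt_const_mul (2 * π : ℂ)).cexp (x := z)).sub_const 1

variable {f : ℂ → ℂ}

theorem exists_mul_cexp_sub_one_eq (hf : Differentiable ℂ f) (hI : f I = f 0) :
    ∃ h : ℂ → ℂ, DifferentiableOn ℂ h (Complex.im ⁻¹' Ioo (-1) 2) ∧
      ∀ z, z.im ∈ Ioo (-1 : ℝ) 2 → h z * (cexp (2 * π * z) - 1) = f z - f 0 := by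
  refine exists_differentiableOn_mul_eq (isOpen_Ioo.preimage Complex.continuous_im)
    (hf.sub_const _).differentiableOn (by fun_prop) fun z hz hz0 ↦ ⟨?_, ?_⟩
  · obtain ⟨m, rfl⟩ := cexp_two_pi_mul_sub_one_eq_zero_iff.1 hz0
    obtain rfl | rfl : m = 0 ∨ m = 1 := by
      simp only [mem_preimage, Complex.mul_im, Complex.intCast_re, Complex.I_im,
        Complex.intCast_im, Complex.I_re, mul_one, mul_zero, add_zero, mem_Ioo] at hz
      norm_cast at hz
      omega
    · simp
    · simp [hI]
  · rw [(hasDerivAt_cexp_two_pi_mul_sub_one z).deriv]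
    exact mul_ne_zero two_pi_ne_zero (Complex.exp_ne_zero _)

theorem isBigO_of_mul_cexp_sub_one_eq {h : ℂ → ℂ} {c : ℝ} (hc : 0 ≤ c)
    (hO : f =O[stripAtTop] fun z ↦ rexp (c * z.re))
    (hh : ∀ z, z.im ∈ Ioo (-1 : ℝ) 2 → h z * (cexp (2 * π * z) - 1) = f z - f 0) :
    h =O[stripAtTop] fun z ↦ rexp (-(2 * π - c) * z.re) := by
  have hconst : (fun _ : ℂ ↦ f 0) =O[stripAtTop] fun z ↦ rexp (c * z.re) := by
    simpa using ((isBigO_cexp_mul hc).mono stripAtTop_le).const_mul_left (f 0)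
  have hden : (fun z : ℂ ↦ rexp (2 * π * z.re)) =O[stripAtTop] fun z ↦ cexp (2 * π * z) - 1 := by
    simpa using (isBigO_exp_re_cexp_sub Real.two_pi_pos).mono stripAtTop_le
  refine isBigO_of_mul_isBigO_mul (fun _ ↦ Real.exp_ne_zero _) hden ?_
  refine (hO.sub hconst).congr' ?_ (.of_forall fun z ↦ ?_)
  · refine eventually_stripAtTop.2 (.of_forall fun T y hy ↦ (hh _ ?_).symm)
    constructor <;> simp <;> linarith [hy.1, hy.2]
  · simp only [← Real.exp_add]
    ring_nf

theorem add_comp_one_sub_of_mul_cexp_sub_one_eq {h : ℂ → ℂ} (hsymm : ∀ z, f (I - z) = f z)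
    (hh : ∀ z, z.im ∈ Ioo (-1 : ℝ) 2 → h z * (cexp (2 * π * z) - 1) = f z - f 0) {y : ℝ}
    (hy : y ∈ Ioo (0 : ℝ) 1) : h (y * I) + h ((1 - y : ℝ) * I) = f 0 - f (y * I) := by
  have hne := cexp_two_pi_mul_sub_one_ne_zero_of_im (z := y * I) (by simpa using hy)
  have hy₁ := hh (y * I) (by constructor <;> simp <;> linarith [hy.1, hy.2])
  have hy₂ := hh ((1 - y : ℝ) * I) (by constructor <;> simp <;> linarith [hy.1, hy.2])
  have hexp : cexp (2 * π * ((1 - y : ℝ) * I)) * cexp (2 * π * (y * I)) = 1 := by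
    rw [← Complex.exp_add, ← Complex.exp_two_pi_mul_I]
    push_cast
    ring_nf
  rw [show ((1 - y : ℝ) * I : ℂ) = I - y * I by push_cast; ring] at *
  rw [hsymm] at hy₂
  apply mul_right_cancel₀ hne
  linear_combination hy₁ - cexp (2 * π * (y * I)) * hy₂ + h (I - y * I) * hexp

theorem integral_vertical_of_mul_cexp_sub_one_eq {h : ℂ → ℂ} (hf : Continuous f)
    (hsymm : ∀ z, f (I - z) = f z) (hcont : ContinuousOn h (Complex.im ⁻¹' Ioo (-1) 2))
    (hh : ∀ z, z.im ∈ Ioo (-1 : ℝ) 2 → h z * (cexp (2 * π * z) - 1) = f z - f 0) :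
    ∫ y in (0 : ℝ)..1, h (y * I) = (f 0 - ∫ y in (0 : ℝ)..1, f (y * I)) / 2 := by
  have hint : IntervalIntegrable (fun y : ℝ ↦ h (y * I)) volume 0 1 := by
    refine (hcont.comp (by fun_prop) fun y hy ↦ ?_).intervalIntegrable
    rw [uIcc_of_le zero_le_one] at hy
    constructor <;> simp <;> linarith [hy.1, hy.2]
  have hint' : IntervalIntegrable (fun y : ℝ ↦ h ((1 - y : ℝ) * I)) volume 0 1 := by
    simpa using (hint.comp_sub_left 1).symm
  have hreflect : ∫ y in (0 : ℝ)..1, h ((1 - y : ℝ) * I) = ∫ y in (0 : ℝ)..1, h (y * I) := by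
    simpa using intervalIntegral.integral_comp_sub_left (a := 0) (b := 1)
      (fun y : ℝ ↦ h (y * I)) 1
  have hsum : (∫ y in (0 : ℝ)..1, h (y * I)) + ∫ y in (0 : ℝ)..1, h ((1 - y : ℝ) * I) =
      ∫ y in (0 : ℝ)..1, (f 0 - f (y * I)) := by
    rw [← intervalIntegral.integral_add hint hint']
    refine intervalIntegral.integral_congr_Ioo_of_le zero_le_one fun y hy ↦ ?_
    exact add_comp_one_sub_of_mul_cexp_sub_one_eq hsymm hh hy
  rw [hreflect, intervalIntegral.integral_sub (by simp)
    (Continuous.intervalIntegrable (by fun_prop) _ _)] at hsum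
  simp only [intervalIntegral.integral_const, sub_zero, one_smul] at hsum
  linear_combination hsum / 2

/-- The contour integral of `(f z - f 0) / (exp (2πz) - 1)` around the half-strip: the two
horizontal sides combine by `f (x + I) = f (-x)`, the vertical one is evaluated by `y ↦ 1 - y`. -/
theorem integral_sub_comp_neg_div_cexp_sub_one (hf : Differentiable ℂ f)
    (hsymm : ∀ z, f (I - z) = f z) {c : ℝ} (hc : 0 ≤ c) (hc' : c < 2 * π)
    (hO : f =O[stripAtTop] fun z ↦ rexp (c * z.re)) :
    IntegrableOn (fun x : ℝ ↦ (f x - f (-x)) / (cexp (2 * π * x) - 1)) (Ioi 0) ∧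
      ∫ x in Ioi (0 : ℝ), (f x - f (-x)) / (cexp (2 * π * x) - 1) =
        I / 2 * (f 0 - ∫ y in (0 : ℝ)..1, f (y * I)) := by
  obtain ⟨h, hh, hmul⟩ := exists_mul_cexp_sub_one_eq hf (by simpa using hsymm 0)
  have hsides : EqOn (fun x : ℝ ↦ h x - h (x + I))
      (fun x ↦ (f x - f (-x)) / (cexp (2 * π * x) - 1)) (Ioi 0) := by
    intro x hx
    have hbot := hmul x (by simp)
    have htop := hmul (x + I) (by constructor <;> simp)
    have hper : cexp (2 * π * (x + I)) = cexp (2 * π * x) := by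
      rw [mul_add, Complex.exp_periodic]
    have hfneg : f (x + I) = f (-x) := by simpa [add_comm] using hsymm (-x)
    rw [hper, hfneg] at htop
    rw [eq_div_iff (cexp_two_pi_mul_sub_one_ne_zero_of_re (by simpa using hx.ne'))]
    linear_combination hbot - htop
  obtain ⟨hint, heq⟩ := integral_sub_comp_add_I (f := h)
    (hh.mono fun z hz ↦ ⟨by linarith [hz.2.1], by linarith [hz.2.2]⟩)
    (sub_pos.2 hc') (isBigO_of_mul_cexp_sub_one_eq hc hO hmul)
  refine ⟨hint.congr_fun hsides measurableSet_Ioi, ?_⟩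
  rw [← setIntegral_congr_fun measurableSet_Ioi hsides, heq,
    integral_vertical_of_mul_cexp_sub_one_eq hf.continuous hsymm hh.continuousOn hmul]
  ring

end AbelPlana

/-! ### Quadratic Gauss sums -/

section GaussSum

theorem sum_range_add_one_of_periodic {α : Type*} [AddCommMonoid α] {F : ℤ → α} {n : ℕ}
    (hF : Function.Periodic F n) :
    ∑ k ∈ Finset.range n, F (k + 1) = ∑ k ∈ Finset.range n, F k := by
  cases n with
  | zero => simp
  | succ n =>
    rw [Finset.sum_range_succ, Finset.sum_range_succ' (fun k : ℕ ↦ F k)]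
    simpa using congrArg (_ + ·) (hF 0)

theorem sum_range_add_of_periodic {α : Type*} [AddCommMonoid α] {F : ℤ → α} {n : ℕ}
    (hF : Function.Periodic F n) (m : ℤ) :
    ∑ k ∈ Finset.range n, F (k + m) = ∑ k ∈ Finset.range n, F k := by
  have hone : Function.Periodic (fun m : ℤ ↦ ∑ k ∈ Finset.range n, F (k + m)) 1 := fun m ↦ by
    simpa only [add_right_comm _ (1 : ℤ) m, add_assoc] using
      sum_range_add_one_of_periodic (hF.add_const m)
  simpa using hone.int_mul_eq m

/-- The quadratic phase `exp (πi k² / n)`, the summand of the Gauss sum attached to `n`. -/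
noncomputable def gaussWeight (n : ℕ) (k : ℤ) : ℂ := cexp (π * I * k ^ 2 / n)

/-- The quadratic Gauss sum `∑_{k < n} exp (πi k² / n)`. -/
noncomputable def quadGaussSum (n : ℕ) : ℂ := ∑ k ∈ Finset.range n, gaussWeight n k

/-- The mean of `φ 0, …, φ (n - 1)` with respect to the complex weights
`gaussWeight n k / quadGaussSum n`, which sum to `1` when `n` is even and positive. -/
noncomputable def gaussAverage (n : ℕ) (φ : ℕ → ℂ) : ℂ :=
  (∑ k ∈ Finset.range n, gaussWeight n k * φ k) / quadGaussSum n

variable {n : ℕ}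

theorem gaussWeight_zero : gaussWeight n 0 = 1 := by simp [gaussWeight]

theorem gaussWeight_ne_zero (k : ℤ) : gaussWeight n k ≠ 0 := Complex.exp_ne_zero _

theorem gaussWeight_neg (k : ℤ) : gaussWeight n (-k) = gaussWeight n k := by simp [gaussWeight]

theorem gaussWeight_add (k m : ℤ) :
    gaussWeight n (k + m) = gaussWeight n k * gaussWeight n m * cexp (2 * π * I * (k * m) / n) := by
  simp only [gaussWeight, ← Complex.exp_add]
  push_cast
  ring_nf

theorem gaussWeight_self (hn : Even n) : gaussWeight n n = 1 := by
  obtain ⟨r, rfl⟩ := hn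
  rw [gaussWeight, Complex.exp_eq_one_iff]
  refine ⟨r, ?_⟩
  push_cast
  rcases eq_or_ne r 0 with rfl | hr
  · simp
  · have : (r : ℂ) ≠ 0 := mod_cast hr
    field_simp
    ring

theorem gaussWeight_periodic (hn : Even n) : Function.Periodic (gaussWeight n) n := by
  intro k
  rcases eq_or_ne n 0 with rfl | hn0
  · simp
  rw [gaussWeight_add, gaussWeight_self hn, Int.cast_natCast, ← mul_assoc,
    mul_div_cancel_right₀ _ (Nat.cast_ne_zero.2 hn0), mul_comm _ (k : ℂ),
    Complex.exp_int_mul_two_pi_mul_I, mul_one, mul_one]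

theorem sum_gaussWeight_mul_cexp (hn : Even n) (m : ℤ) :
    ∑ k ∈ Finset.range n, gaussWeight n k * cexp (2 * π * I * (k * m) / n) =
      quadGaussSum n * (gaussWeight n m)⁻¹ := by
  rw [eq_mul_inv_iff_mul_eq₀ (gaussWeight_ne_zero m), quadGaussSum,
    ← sum_range_add_of_periodic (gaussWeight_periodic hn) m, Finset.sum_mul]
  refine Finset.sum_congr rfl fun k _ ↦ ?_
  rw [gaussWeight_add, Int.cast_natCast, mul_right_comm]

theorem sum_range_cexp_two_pi_mul_div {k : ℕ} (hk : k < n) :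
    ∑ m ∈ Finset.range n, cexp (2 * π * I * (k * m) / n) = if k = 0 then (n : ℂ) else 0 := by
  have hζ := Complex.isPrimitiveRoot_exp n (Nat.ne_zero_of_lt hk)
  have hpow (m : ℕ) : cexp (2 * π * I * (k * m) / n) = (cexp (2 * π * I / n) ^ k) ^ m := by
    rw [← pow_mul, ← Complex.exp_nat_mul]
    push_cast
    ring_nf
  simp only [hpow]
  split_ifs with hk0
  · simp [hk0]
  · rw [geom_sum_eq (hζ.pow_ne_one_of_pos_of_lt hk0 hk), pow_right_comm, hζ.pow_eq_one, one_pow,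
      sub_self, zero_div]

theorem quadGaussSum_mul_sum_inv (hn : Even n) :
    quadGaussSum n * ∑ m ∈ Finset.range n, (gaussWeight n m)⁻¹ = n := by
  simp only [Finset.mul_sum, ← sum_gaussWeight_mul_cexp hn, Int.cast_natCast]
  rw [Finset.sum_comm]
  calc
    ∑ k ∈ Finset.range n, ∑ m ∈ Finset.range n, gaussWeight n k * cexp (2 * π * I * (k * m) / n)
      = ∑ k ∈ Finset.range n, if k = 0 then gaussWeight n k * n else 0 :=
        Finset.sum_congr rfl fun k hk ↦ by
          rw [← Finset.mul_sum, sum_range_cexp_two_pi_mul_div (Finset.mem_range.1 hk), mul_ite,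
            mul_zero]
    _ = n := by
      rcases n.eq_zero_or_pos with rfl | hpos
      · simp
      · simp [gaussWeight_zero, hpos.ne']

theorem quadGaussSum_ne_zero (hn : Even n) (hn0 : n ≠ 0) : quadGaussSum n ≠ 0 :=
  left_ne_zero_of_mul (b := ∑ m ∈ Finset.range n, (gaussWeight n m)⁻¹)
    (by simpa [quadGaussSum_mul_sum_inv hn] using hn0)

theorem gaussAverage_cexp (hn : Even n) (hn0 : n ≠ 0) (m : ℤ) :
    gaussAverage n (fun k ↦ cexp (2 * π * I * (k * m) / n)) = (gaussWeight n m)⁻¹ := by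
  rw [gaussAverage, sum_gaussWeight_mul_cexp hn,
    mul_div_cancel_left₀ _ (quadGaussSum_ne_zero hn hn0)]

theorem gaussAverage_add (φ ψ : ℕ → ℂ) :
    gaussAverage n (fun k ↦ φ k + ψ k) = gaussAverage n φ + gaussAverage n ψ := by
  simp only [gaussAverage, mul_add, Finset.sum_add_distrib, add_div]

theorem gaussAverage_const_mul (c : ℂ) (φ : ℕ → ℂ) :
    gaussAverage n (fun k ↦ c * φ k) = c * gaussAverage n φ := by
  simp only [gaussAverage, mul_left_comm _ c, ← Finset.mul_sum, mul_div_assoc]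

theorem hasDerivAt_gaussAverage {φ : ℕ → ℂ → ℂ} {φ' : ℕ → ℂ} {z : ℂ}
    (h : ∀ k, HasDerivAt (φ k) (φ' k) z) :
    HasDerivAt (fun z ↦ gaussAverage n fun k ↦ φ k z) (gaussAverage n φ') z :=
  (HasDerivAt.fun_sum fun k _ ↦ (h k).const_mul _).div_const _

theorem isBigO_gaussAverage {l : Filter ℂ} {φ : ℕ → ℂ → ℂ} {u : ℂ → ℝ}
    (h : ∀ k < n, φ k =O[l] u) : (fun z ↦ gaussAverage n fun k ↦ φ k z) =O[l] u := by
  simp only [gaussAverage, div_eq_inv_mul]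
  exact (IsBigO.fun_sum fun k hk ↦ (h k (Finset.mem_range.1 hk)).const_mul_left _).const_mul_left _

end GaussSum

/-! ### The Mordell function of a Gauss sum -/

section Mordell

theorem eq_of_mul_eq_mul_right_of_differentiable {u v g : ℂ → ℂ} (hu : Differentiable ℂ u)
    (hv : Differentiable ℂ v) (hg : Differentiable ℂ g) (hg0 : ∃ z, g z ≠ 0)
    (h : ∀ z, u z * g z = v z * g z) : u = v := by
  have han {w : ℂ → ℂ} (hw : Differentiable ℂ w) : AnalyticOnNhd ℂ w univ :=
    hw.differentiableOn.analyticOnNhd isOpen_univ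
  rcases AnalyticOnNhd.eq_zero_or_eq_zero_of_mul_eq_zero (f := fun z ↦ u z - v z)
    (han (hu.sub hv)) (han hg) (fun z _ ↦ by rw [sub_mul, h z, sub_self])
    isPreconnected_univ with huv | hg'
  · exact funext fun z ↦ sub_eq_zero.1 (huv z (mem_univ z))
  · exact absurd (hg' _ (mem_univ _)) hg0.choose_spec

theorem sinh_eq_zero_iff {z : ℂ} : Complex.sinh z = 0 ↔ ∃ m : ℤ, z = m * π * I := by
  rw [← mul_left_inj' Complex.I_ne_zero, zero_mul, ← Complex.sin_mul_I, Complex.sin_eq_zero_iff]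
  constructor
  · rintro ⟨m, hm⟩
    exact ⟨-m, by push_cast; linear_combination -I * hm + z * Complex.I_mul_I⟩
  · rintro ⟨m, rfl⟩
    exact ⟨-m, by push_cast; linear_combination m * π * Complex.I_mul_I⟩

/-- The frequencies `π (n - 2k)` of the hyperbolic cosines averaged in `mordellNumer`. -/
noncomputable def gaussFreq (n k : ℕ) : ℝ := π * (n - 2 * k)

theorem gaussAverage_gaussFreq_sq {n : ℕ} (hn0 : n ≠ 0) :
    gaussAverage n (fun k ↦ (gaussFreq n k : ℂ) ^ 2) =
      (π * n) ^ 2 * gaussAverage n fun k ↦ (1 - 2 * k / n) ^ 2 := by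
  have hn0' : (n : ℂ) ≠ 0 := mod_cast hn0
  rw [← gaussAverage_const_mul]
  congr 1 with k
  rw [gaussFreq]
  push_cast
  field_simp

/-- The numerator of the Mordell function `mordellNumer n z / (2 sinh (πnz))`: the Gauss-weighted
average of hyperbolic cosines interpolates `exp (πn(iz² + z))` at the zeros `mi / n` of the
denominator, so that the quotient is entire. -/
noncomputable def mordellNumer (n : ℕ) (z : ℂ) : ℂ :=
  cexp (π * n * (I * z ^ 2 + z)) - gaussAverage n fun k ↦ Complex.cosh (gaussFreq n k * z)

variable {n : ℕ}

theorem abs_gaussFreq_le {k : ℕ} (hk : k < n) : |gaussFreq n k| ≤ π * n := by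
  have hk' : (k : ℝ) < n := mod_cast hk
  rw [gaussFreq, abs_mul, abs_of_pos pi_pos]
  gcongr
  exact abs_le.2 ⟨by linarith, by linarith [k.cast_nonneg (α := ℝ)]⟩

theorem gaussAverage_cosh (hn : Even n) (hn0 : n ≠ 0) (m : ℤ) :
    gaussAverage n (fun k ↦ Complex.cosh (gaussFreq n k * (m * I / n))) =
      cexp (m * π * I) * (gaussWeight n m)⁻¹ := by
  have hn0' : (n : ℂ) ≠ 0 := mod_cast hn0
  have hexp : cexp (-(m * π * I)) = cexp (m * π * I) := by
    rw [Complex.exp_eq_exp_iff_exists_int]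
    exact ⟨-m, by push_cast; ring⟩
  have hcosh (k : ℕ) : Complex.cosh (gaussFreq n k * (m * I / n)) =
      cexp (m * π * I) / 2 * (cexp (2 * π * I * (k * (-m : ℤ)) / n) +
        cexp (2 * π * I * (k * m) / n)) := by
    have hpos : (gaussFreq n k * (m * I / n) : ℂ) =
        m * π * I + 2 * π * I * (k * (-m : ℤ)) / n := by
      rw [gaussFreq]
      push_cast
      field_simp
      ring
    have hneg : -(gaussFreq n k * (m * I / n) : ℂ) =
        -(m * π * I) + 2 * π * I * (k * m) / n := by
      rw [hpos]
      push_cast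
      ring
    rw [Complex.cosh, hneg, hpos, Complex.exp_add, Complex.exp_add, hexp]
    ring
  simp only [hcosh]
  rw [gaussAverage_const_mul, gaussAverage_add, gaussAverage_cexp hn hn0,
    gaussAverage_cexp hn hn0, gaussWeight_neg]
  ring

theorem mordellNumer_eq_zero (hn : Even n) (hn0 : n ≠ 0) {z : ℂ}
    (hz : Complex.sinh (π * n * z) = 0) : mordellNumer n z = 0 := by
  obtain ⟨m, hm⟩ := sinh_eq_zero_iff.1 hz
  have hn0' : (n : ℂ) ≠ 0 := mod_cast hn0
  have hπ : (π : ℂ) ≠ 0 := mod_cast pi_ne_zero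
  obtain rfl : z = m * I / n := by
    rw [eq_div_iff hn0']
    exact mul_left_cancel₀ hπ (by linear_combination hm)
  rw [mordellNumer, gaussAverage_cosh hn hn0, gaussWeight, ← Complex.exp_neg, ← Complex.exp_add,
    sub_eq_zero]
  congr 1
  field_simp
  linear_combination (m : ℂ) ^ 2 * Complex.I_sq

theorem mordellNumer_sub_comp_neg (z : ℂ) : mordellNumer n z - mordellNumer n (-z) =
    cexp (π * I * n * z ^ 2) * (2 * Complex.sinh (π * n * z)) := by
  simp only [mordellNumer, mul_neg, Complex.cosh_neg, Complex.two_sinh, mul_sub, ← Complex.exp_add]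
  ring_nf

theorem cosh_gaussFreq_mul_I_sub (hn : Even n) (k : ℕ) (z : ℂ) :
    Complex.cosh (gaussFreq n k * (I - z)) = Complex.cosh (gaussFreq n k * z) := by
  obtain ⟨r, rfl⟩ := hn
  have hfreq : (gaussFreq (r + r) k * (I - z) : ℂ) =
      ((r - k : ℤ) : ℂ) * (2 * π * I) - gaussFreq (r + r) k * z := by
    rw [gaussFreq]
    push_cast
    ring
  rw [hfreq, Complex.cosh_periodic.int_mul_sub_eq, Complex.cosh_neg]

theorem mordellNumer_I_sub (hn : Even n) (z : ℂ) : mordellNumer n (I - z) = mordellNumer n z := by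
  simp only [mordellNumer, cosh_gaussFreq_mul_I_sub hn]
  congr 2
  linear_combination (π * n * (I - 2 * z)) * Complex.I_sq

theorem sinh_pi_mul_I_sub (hn : Even n) (z : ℂ) :
    Complex.sinh (π * n * (I - z)) = -Complex.sinh (π * n * z) := by
  obtain ⟨r, rfl⟩ := hn
  rw [show (π * (r + r : ℕ) * (I - z) : ℂ) = (r : ℤ) * (2 * π * I) - π * (r + r : ℕ) * z by
    push_cast; ring, Complex.sinh_periodic.int_mul_sub_eq, Complex.sinh_neg]

theorem hasDerivAt_two_sinh_pi_mul (z : ℂ) :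
    HasDerivAt (fun z : ℂ ↦ 2 * Complex.sinh (π * n * z)) (2 * (π * n * Complex.cosh (π * n * z)))
      z := by
  simpa [mul_comm] using ((hasDerivAt_const_mul (π * n : ℂ)).csinh (x := z)).const_mul 2

theorem hasDerivAt_cexp_mordell (z : ℂ) :
    HasDerivAt (fun z : ℂ ↦ cexp (π * n * (I * z ^ 2 + z)))
      (cexp (π * n * (I * z ^ 2 + z)) * (π * n * (2 * I * z + 1))) z := by
  refine HasDerivAt.cexp ?_
  refine ((((hasDerivAt_pow 2 z).const_mul I).add (hasDerivAt_id' z)).const_mul _).congr_deriv ?_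
  push_cast
  ring

theorem hasDerivAt_mordellNumer (z : ℂ) :
    HasDerivAt (mordellNumer n)
      (cexp (π * n * (I * z ^ 2 + z)) * (π * n * (2 * I * z + 1)) -
        gaussAverage n fun k ↦ gaussFreq n k * Complex.sinh (gaussFreq n k * z)) z :=
  (hasDerivAt_cexp_mordell z).sub
    (hasDerivAt_gaussAverage fun _ ↦ (hasDerivAt_const_mul _).ccosh.congr_deriv (mul_comm _ _))

/-- `B` is the entire function `mordellNumer n z / (2 sinh (πnz))`; the equation is multiplied out
because the quotient has removable singularities. -/
structure IsMordellFunction (n : ℕ) (B : ℂ → ℂ) : Prop where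
  differentiable : Differentiable ℂ B
  mul_two_sinh (z : ℂ) : B z * (2 * Complex.sinh (π * n * z)) = mordellNumer n z

theorem deriv_two_sinh_pi_mul_ne_zero (hn0 : n ≠ 0) {z : ℂ}
    (hz : Complex.sinh (π * n * z) = 0) :
    deriv (fun z : ℂ ↦ 2 * Complex.sinh (π * n * z)) z ≠ 0 := by
  have hcosh : Complex.cosh (π * n * z) ≠ 0 := fun hcosh ↦ by
    simpa [hz, hcosh] using Complex.cosh_sq_sub_sinh_sq (π * n * z)
  rw [(hasDerivAt_two_sinh_pi_mul z).deriv]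
  simp [hcosh, hn0, pi_ne_zero]

theorem exists_isMordellFunction (hn : Even n) (hn0 : n ≠ 0) : ∃ B, IsMordellFunction n B := by
  have hnumer : Differentiable ℂ (mordellNumer n) := fun z ↦
    (hasDerivAt_mordellNumer z).differentiableAt
  obtain ⟨B, hB, hmul⟩ := exists_differentiableOn_mul_eq isOpen_univ hnumer.differentiableOn
    (g := fun z ↦ 2 * Complex.sinh (π * n * z)) (by fun_prop) fun z _ hz ↦
      have hsinh := (mul_eq_zero_iff_left two_ne_zero).1 hz
      ⟨mordellNumer_eq_zero hn hn0 hsinh, deriv_two_sinh_pi_mul_ne_zero hn0 hsinh⟩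
  exact ⟨B, differentiableOn_univ.1 hB, fun z ↦ hmul z (mem_univ z)⟩

theorem exists_two_sinh_pi_mul_ne_zero (hn0 : n ≠ 0) :
    ∃ z : ℂ, 2 * Complex.sinh (π * n * z) ≠ 0 := by
  refine ⟨(1 : ℝ), mul_ne_zero two_ne_zero ?_⟩
  have : Real.sinh (π * n * 1) ≠ 0 := Real.sinh_ne_zero.2 (by positivity)
  exact_mod_cast this

theorem isBigO_const_exp_re {E : Type*} [SeminormedAddCommGroup E] (c : E) :
    (fun _ : ℂ ↦ c) =O[stripAtTop] fun z ↦ rexp z.re := by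
  refine .trans (isBigO_const_const c (one_ne_zero (α := ℝ)) _) (.of_bound 1 ?_)
  filter_upwards [tendsto_re_stripAtTop.eventually_ge_atTop 0] with z hz
  simpa using hz

theorem isBigO_id_exp_re :
    (fun z : ℂ ↦ z) =O[stripAtTop] fun z ↦ rexp z.re := by
  refine .of_bound 1 (eventually_stripAtTop.2 ?_)
  filter_upwards [eventually_ge_atTop 0] with T hT y hy
  calc
    ‖(T + y * I : ℂ)‖ ≤ T + 1 := by
      refine (norm_add_le _ _).trans ?_
      simpa [abs_of_nonneg hT, abs_of_nonneg hy.1] using hy.2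
    _ ≤ 1 * ‖rexp (T + y * I : ℂ).re‖ := by simpa using Real.add_one_le_exp T

theorem norm_cexp_mordell (z : ℂ) :
    ‖cexp (π * n * (I * z ^ 2 + z))‖ = rexp (π * n * z.re - 2 * π * n * (z.re * z.im)) := by
  rw [Complex.norm_exp, ← Complex.ofReal_natCast, ← Complex.ofReal_mul, Complex.re_ofReal_mul, sq]
  simp only [Complex.add_re, Complex.I_mul_re, Complex.mul_im]
  ring_nf

theorem isBigO_cexp_mordell :
    (fun z : ℂ ↦ cexp (π * n * (I * z ^ 2 + z))) =O[stripAtTop] fun z ↦ rexp (π * n * z.re) := by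
  refine .of_bound 1 (eventually_stripAtTop.2 ?_)
  filter_upwards [eventually_ge_atTop 0] with T hT y hy
  have hTy : 0 ≤ T * y := mul_nonneg hT hy.1
  rw [norm_cexp_mordell, one_mul, Real.norm_eq_abs, Real.abs_exp, Real.exp_le_exp,
    sub_le_self_iff]
  simpa using by positivity

theorem isBigO_mordellNumer :
    mordellNumer n =O[stripAtTop] fun z ↦ rexp (π * n * z.re) :=
  isBigO_cexp_mordell.sub <| isBigO_gaussAverage fun _ hk ↦
    (isBigO_cosh_mul (abs_gaussFreq_le hk)).mono stripAtTop_le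

theorem isBigO_exp_two_sinh_pi_mul (hn0 : n ≠ 0) :
    (fun z : ℂ ↦ rexp (π * n * z.re)) =O[stripAtTop] fun z ↦ 2 * Complex.sinh (π * n * z) := by
  have hlt : -(π * n) < π * n := neg_lt_self (by positivity)
  simpa [Complex.two_sinh] using (isBigO_exp_re_cexp_sub hlt).mono stripAtTop_le

namespace IsMordellFunction

variable {B : ℂ → ℂ}

theorem add_comp_neg (hn0 : n ≠ 0) (hB : IsMordellFunction n B) :
    (fun z ↦ B z + B (-z)) = fun z ↦ cexp (π * I * n * z ^ 2) := by
  have := hB.differentiable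
  refine eq_of_mul_eq_mul_right_of_differentiable (by fun_prop) (by fun_prop) (by fun_prop)
    (exists_two_sinh_pi_mul_ne_zero hn0) fun z ↦ ?_
  have hneg := hB.mul_two_sinh (-z)
  rw [mul_neg, Complex.sinh_neg] at hneg
  linear_combination hB.mul_two_sinh z - hneg + mordellNumer_sub_comp_neg z

theorem comp_I_sub (hn : Even n) (hn0 : n ≠ 0) (hB : IsMordellFunction n B) :
    (fun z ↦ B (I - z)) = fun z ↦ -B z := by
  have := hB.differentiable
  refine eq_of_mul_eq_mul_right_of_differentiable (by fun_prop) (by fun_prop) (by fun_prop)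
    (exists_two_sinh_pi_mul_ne_zero hn0) fun z ↦ ?_
  have hrefl := hB.mul_two_sinh (I - z)
  rw [sinh_pi_mul_I_sub hn, mordellNumer_I_sub hn] at hrefl
  linear_combination hB.mul_two_sinh z - hrefl

theorem apply_zero (hn0 : n ≠ 0) (hB : IsMordellFunction n B) : B 0 = 1 / 2 := by
  have h := congrFun (hB.add_comp_neg hn0) 0
  norm_num at h
  linear_combination h / 2

theorem apply_I (hn : Even n) (hn0 : n ≠ 0) (hB : IsMordellFunction n B) : B I = -1 / 2 := by
  have h := congrFun (hB.comp_I_sub hn hn0) 0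
  rw [sub_zero, hB.apply_zero hn0] at h
  linear_combination h

theorem deriv_I_sub (hn : Even n) (hn0 : n ≠ 0) (hB : IsMordellFunction n B) (z : ℂ) :
    deriv B (I - z) = deriv B z := by
  have h := congrArg (deriv · z) (hB.comp_I_sub hn hn0)
  simpa only [deriv_comp_const_sub, deriv.fun_neg, neg_inj] using h

theorem deriv_sub_deriv_neg (hn0 : n ≠ 0) (hB : IsMordellFunction n B) (z : ℂ) :
    deriv B z - deriv B (-z) = 2 * π * I * n * z * cexp (π * I * n * z ^ 2) := by
  have hd := hB.differentiable
  have h := congrArg (deriv · z) (hB.add_comp_neg hn0)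
  have hexp := (((hasDerivAt_pow 2 z).const_mul (π * I * n)).cexp).deriv
  simp only [deriv_fun_add hd.differentiableAt (hd.fun_comp differentiable_neg).differentiableAt,
    deriv_comp_neg, hexp] at h
  rw [sub_eq_add_neg, h]
  push_cast
  ring

theorem differentiable_deriv (hB : IsMordellFunction n B) : Differentiable ℂ (deriv B) :=
  differentiableOn_univ.1 (hB.differentiable.differentiableOn.deriv isOpen_univ)

theorem integral_deriv_vertical (hn : Even n) (hn0 : n ≠ 0) (hB : IsMordellFunction n B) :
    ∫ y in (0 : ℝ)..1, deriv B (y * I) = I := by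
  have hderiv (y : ℝ) : HasDerivAt (fun y : ℝ ↦ B (y * I)) (deriv B (y * I) * I) y :=
    (hB.differentiable.differentiableAt.hasDerivAt.comp (y : ℂ)
      (hasDerivAt_mul_const I)).comp_ofReal
  have hcont := hB.differentiable_deriv.continuous
  have h := intervalIntegral.integral_eq_sub_of_hasDerivAt (a := 0) (b := 1)
    (fun y _ ↦ hderiv y) (Continuous.intervalIntegrable (by fun_prop) _ _)
  rw [intervalIntegral.integral_mul_const] at h
  simp only [Complex.ofReal_one, one_mul, Complex.ofReal_zero, zero_mul, hB.apply_I hn hn0,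
    hB.apply_zero hn0] at h
  linear_combination -I * h + (∫ y in (0 : ℝ)..1, deriv B (y * I)) * Complex.I_sq

theorem deriv_mul_two_sinh (hB : IsMordellFunction n B) (z : ℂ) :
    deriv B z * (2 * Complex.sinh (π * n * z)) + B z * (2 * (π * n * Complex.cosh (π * n * z))) =
      cexp (π * n * (I * z ^ 2 + z)) * (π * n * (2 * I * z + 1)) -
        gaussAverage n fun k ↦ gaussFreq n k * Complex.sinh (gaussFreq n k * z) := by
  rw [← (hasDerivAt_mordellNumer z).deriv, ← funext hB.mul_two_sinh]
  exact ((hB.differentiable z).hasDerivAt.mul (hasDerivAt_two_sinh_pi_mul z)).deriv.symm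

theorem isBigO_one (hn0 : n ≠ 0) (hB : IsMordellFunction n B) :
    B =O[stripAtTop] fun _ ↦ (1 : ℝ) :=
  isBigO_of_mul_isBigO_mul (fun _ ↦ Real.exp_ne_zero _) (isBigO_exp_two_sinh_pi_mul hn0)
    (by simpa only [hB.mul_two_sinh, one_mul] using isBigO_mordellNumer)

theorem isBigO_deriv (hn0 : n ≠ 0) (hB : IsMordellFunction n B) :
    deriv B =O[stripAtTop] fun z ↦ rexp z.re := by
  refine isBigO_of_mul_isBigO_mul (fun _ ↦ Real.exp_ne_zero _) (isBigO_exp_two_sinh_pi_mul hn0) ?_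
  have hpoly : (fun z : ℂ ↦ π * n * (2 * I * z + 1)) =O[stripAtTop] fun z ↦ rexp z.re :=
    ((isBigO_id_exp_re.const_mul_left (2 * I)).add (isBigO_const_exp_re 1)).const_mul_left _
  have hcosh : (fun z ↦ B z * (2 * (π * n * Complex.cosh (π * n * z)))) =O[stripAtTop]
      fun z ↦ rexp z.re * rexp (π * n * z.re) := by
    refine ((hB.isBigO_one hn0).trans (isBigO_const_exp_re 1)).mul
      (.const_mul_left (.const_mul_left ?_ _) _)
    simpa using (isBigO_cosh_mul (abs_of_nonneg (by positivity : 0 ≤ π * n)).le).mono stripAtTop_le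
  have hsinh : (fun z : ℂ ↦ gaussAverage n fun k ↦ gaussFreq n k *
      Complex.sinh (gaussFreq n k * z)) =O[stripAtTop] fun z ↦ rexp z.re * rexp (π * n * z.re) :=
    isBigO_gaussAverage fun k hk ↦ (isBigO_const_exp_re _).mul
      ((isBigO_sinh_mul (abs_gaussFreq_le hk)).mono stripAtTop_le)
  refine ((isBigO_cexp_mordell.mul hpoly).congr_right fun z ↦ mul_comm _ _).sub
    (hsinh.add hcosh) |>.congr_left fun z ↦ ?_
  linear_combination -hB.deriv_mul_two_sinh z

theorem four_pi_mul_deriv_zero (hB : IsMordellFunction n B) :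
    4 * π * n * deriv B 0 =
      2 * π * n * I + (π * n) ^ 2 - gaussAverage n fun k ↦ (gaussFreq n k : ℂ) ^ 2 := by
  have hcosh := (((hasDerivAt_const_mul (π * n : ℂ)).ccosh (x := 0)).const_mul
    (π * n : ℂ)).const_mul 2
  have hsinh := hasDerivAt_two_sinh_pi_mul (n := n) 0
  have hleft := ((hB.differentiable_deriv 0).hasDerivAt.mul hsinh).add
    ((hB.differentiable 0).hasDerivAt.mul hcosh)
  have havg := hasDerivAt_gaussAverage (n := n) fun k ↦
    ((hasDerivAt_const_mul (gaussFreq n k : ℂ)).csinh (x := 0)).const_mul (gaussFreq n k : ℂ)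
  have hlin := ((hasDerivAt_const_mul (x := 0) (2 * I)).add_const 1).const_mul (π * n : ℂ)
  have hright := ((hasDerivAt_cexp_mordell (n := n) 0).mul hlin).sub havg
  have h := hleft.unique (hright.congr_of_eventuallyEq (.of_forall hB.deriv_mul_two_sinh))
  simp only [mul_zero, zero_mul, zero_add, add_zero, mul_one, one_mul, zero_pow two_ne_zero,
    Complex.sinh_zero, Complex.cosh_zero, Complex.exp_zero, ← sq] at h
  linear_combination h

theorem deriv_zero (hn0 : n ≠ 0) (hB : IsMordellFunction n B) :
    deriv B 0 = I / 2 + π * n * (1 - gaussAverage n fun k ↦ (1 - 2 * k / n) ^ 2) / 4 := by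
  have h := hB.four_pi_mul_deriv_zero
  have hn0' : (n : ℂ) ≠ 0 := mod_cast hn0
  have hπ : (π : ℂ) ≠ 0 := mod_cast pi_ne_zero
  rw [gaussAverage_gaussFreq_sq hn0] at h
  apply mul_left_cancel₀ (mul_ne_zero (mul_ne_zero (OfNat.ofNat_ne_zero 4) hπ) hn0')
  linear_combination h

theorem integral_mul_cexp_sq_div (hn : Even n) (hn0 : n ≠ 0) (hB : IsMordellFunction n B) :
    IntegrableOn
      (fun x : ℝ ↦ 2 * π * I * n * x * cexp (π * I * n * x ^ 2) / (cexp (2 * π * x) - 1)) (Ioi 0) ∧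
    ∫ x in Ioi (0 : ℝ),
        2 * π * I * n * x * cexp (π * I * n * x ^ 2) / (cexp (2 * π * x) - 1) =
      I / 2 * (deriv B 0 - I) := by
  simpa only [hB.deriv_sub_deriv_neg hn0, hB.integral_deriv_vertical hn hn0] using
    integral_sub_comp_neg_div_cexp_sub_one hB.differentiable_deriv (hB.deriv_I_sub hn hn0)
      zero_le_one (by linarith [pi_gt_three]) (by simpa using hB.isBigO_deriv hn0)

end IsMordellFunction

end Mordell

/-! ### Integrals of Ramanujan -/

section Ramanujan

theorem two_mul_rpow_two_smul {E : Type*} [NormedAddCommGroup E] [NormedSpace ℝ E] (f : ℝ → E) :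
    (fun x : ℝ ↦ (2 * x ^ ((2 : ℝ) - 1)) • f (x ^ (2 : ℝ))) = fun x ↦ (2 * x) • f (x ^ 2) := by
  norm_num

theorem integrableOn_Ioi_comp_sq {E : Type*} [NormedAddCommGroup E] [NormedSpace ℝ E] {f : ℝ → E} :
    IntegrableOn (fun x ↦ (2 * x) • f (x ^ 2)) (Ioi 0) ↔ IntegrableOn f (Ioi 0) := by
  simpa [← two_mul_rpow_two_smul] using integrableOn_Ioi_comp_rpow_iff f (p := 2) two_ne_zero

theorem integral_Ioi_comp_sq {E : Type*} [NormedAddCommGroup E] [NormedSpace ℝ E] (f : ℝ → E) :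
    ∫ x in Ioi (0 : ℝ), (2 * x) • f (x ^ 2) = ∫ x in Ioi 0, f x := by
  simpa [← two_mul_rpow_two_smul] using integral_comp_rpow_Ioi_of_pos (g := f) (p := 2) two_pos

variable {n : ℕ}

theorem integral_cexp_div_exp_sqrt_sub_one_s7 (hn : Even n) (hn0 : n ≠ 0) :
    IntegrableOn (fun x : ℝ ↦ cexp (n * π * x * I) / (rexp (2 * π * √x) - 1 : ℝ)) (Ioi 0) ∧
    ∫ x in Ioi (0 : ℝ), cexp (n * π * x * I) / (rexp (2 * π * √x) - 1 : ℝ) =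
      (1 - gaussAverage n fun k ↦ (1 - 2 * k / n) ^ 2) / 8 - (4 * π * n : ℝ)⁻¹ * I := by
  obtain ⟨B, hB⟩ := exists_isMordellFunction hn hn0
  obtain ⟨hint, heq⟩ := hB.integral_mul_cexp_sq_div hn hn0
  have hsubst : EqOn
      (fun x : ℝ ↦ (2 * x) • (cexp (n * π * (x ^ 2 : ℝ) * I) / (rexp (2 * π * √(x ^ 2)) - 1 : ℝ)))
      (fun x ↦ (π * I * n : ℂ)⁻¹ *
        (2 * π * I * n * x * cexp (π * I * n * x ^ 2) / (cexp (2 * π * x) - 1))) (Ioi 0) := by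
    intro x hx
    simp only [Real.sqrt_sq (le_of_lt hx), Complex.real_smul]
    push_cast
    field_simp
  rw [← integrableOn_Ioi_comp_sq, ← integral_Ioi_comp_sq,
    setIntegral_congr_fun measurableSet_Ioi hsubst, integral_const_mul, heq, hB.deriv_zero hn0]
  refine ⟨IntegrableOn.congr_fun (hint.const_mul _) hsubst.symm measurableSet_Ioi, ?_⟩
  push_cast
  field_simp
  ring

theorem ramanujan_RC_zero_six_general (hn : Even n) (hn0 : n ≠ 0) :
    IntegrableOn (fun x : ℝ ↦ Real.cos (n * π * x) / (Real.exp (2 * π * √x) - 1)) (Ioi 0) ∧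
    ∫ x in Ioi (0 : ℝ), Real.cos (n * π * x) / (Real.exp (2 * π * √x) - 1) =
      (1 - (gaussAverage n fun k ↦ (1 - 2 * k / n) ^ 2).re) / 8 := by
  obtain ⟨hint, heq⟩ := integral_cexp_div_exp_sqrt_sub_one_s7 hn hn0
  have hre : (fun x : ℝ ↦ Real.cos (n * π * x) / (Real.exp (2 * π * √x) - 1)) = fun x : ℝ ↦
      (cexp (n * π * x * I) / (rexp (2 * π * √x) - 1 : ℝ)).re := by
    funext x
    rw [Complex.div_ofReal_re]
    norm_cast
    rw [Complex.exp_ofReal_mul_I_re]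
  rw [hre]
  refine ⟨hint.re, (integral_re hint).trans ?_⟩
  rw [heq]
  simp

end Ramanujan

/-! ### The case `n = 6` -/

theorem gaussWeight_natCast_eq_pow (n k : ℕ) : gaussWeight n k = gaussWeight n 1 ^ k ^ 2 := by
  rw [gaussWeight, gaussWeight, ← Complex.exp_nat_mul]
  push_cast
  ring_nf

theorem gaussWeight_six_one : gaussWeight 6 1 = (√3 + I) / 2 := by
  rw [gaussWeight, show (π * I * (1 : ℤ) ^ 2 / (6 : ℕ) : ℂ) = (π / 6 : ℝ) * I by push_cast; ring,
    Complex.exp_mul_I, ← Complex.ofReal_cos, ← Complex.ofReal_sin, cos_pi_div_six, sin_pi_div_six]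
  push_cast
  ring

theorem sqrt_three_sq : (√3 : ℂ) ^ 2 = 3 := by
  exact_mod_cast Real.sq_sqrt (zero_le_three (α := ℝ))

theorem gaussWeight_six_one_pow_three : gaussWeight 6 1 ^ 3 = I := by
  rw [gaussWeight_six_one]
  linear_combination (√3 + 3 * I) / 8 * sqrt_three_sq + (3 * √3 + I) / 8 * Complex.I_sq

theorem sum_gaussWeight_six_mul (φ : ℕ → ℂ) :
    ∑ k ∈ Finset.range 6, gaussWeight 6 k * φ k =
      φ 0 - I * φ 3 + (√3 + I) / 2 * (φ 1 + φ 5 + I * (φ 2 + φ 4)) := by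
  have hcube := gaussWeight_six_one_pow_three
  have h2 : gaussWeight 6 2 = I * gaussWeight 6 1 := by
    have hpow := gaussWeight_natCast_eq_pow 6 2
    push_cast at hpow
    linear_combination hpow + gaussWeight 6 1 * hcube
  have h3 : gaussWeight 6 3 = -I := by
    have hpow := gaussWeight_natCast_eq_pow 6 3
    push_cast at hpow
    rw [hpow, pow_mul _ 3 3, hcube, Complex.I_pow_three]
  have hper := gaussWeight_periodic (n := 6) (by decide)
  have h4 : gaussWeight 6 4 = gaussWeight 6 2 := by simpa [gaussWeight_neg] using hper (-2)
  have h5 : gaussWeight 6 5 = gaussWeight 6 1 := by simpa [gaussWeight_neg] using hper (-1)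
  simp only [Finset.sum_range_succ, Finset.sum_range_zero, Nat.cast_zero, Nat.cast_one,
    Nat.cast_ofNat, h5, h4, h3, h2, gaussWeight_zero, gaussWeight_six_one]
  ring

theorem quadGaussSum_six : quadGaussSum 6 = √3 * (1 + I) := by
  have h := sum_gaussWeight_six_mul 1
  simp only [Pi.one_apply, mul_one] at h
  rw [quadGaussSum, h]
  linear_combination Complex.I_sq

theorem gaussAverage_six : gaussAverage 6 (fun k ↦ (1 - 2 * k / 6) ^ 2) =
    ((5 + 4 * √3) / 18 : ℝ) - ((9 + 4 * √3) / 54 : ℝ) * I := by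
  have hne : quadGaussSum 6 ≠ 0 := quadGaussSum_ne_zero (by decide) (by decide)
  rw [gaussAverage, div_eq_iff hne, quadGaussSum_six, sum_gaussWeight_six_mul]
  push_cast
  linear_combination -(4 * I + 8) / 27 * sqrt_three_sq +
    (√3 / 6 + 1 / 9 + 2 / 27 * √3 ^ 2) * Complex.I_sq

theorem ramanujan_value_six :
    (1 - (gaussAverage 6 fun k ↦ (1 - 2 * k / 6) ^ 2).re) / 8 = (13 - 4 * √3) / 144 := by
  rw [gaussAverage_six, Complex.sub_re, Complex.ofReal_re, Complex.re_ofReal_mul, Complex.I_re]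
  ring

/-- Ramanujan's integral `R_C(0, 6)` converges and equals `(13 - 4√3)/144`. -/
theorem ramanujan_RC_zero_six :
    IntegrableOn
      (fun x : ℝ => Real.cos (6 * π * x) / (Real.exp (2 * π * Real.sqrt x) - 1)) (Ioi 0) ∧
    (∫ x in Ioi (0:ℝ), Real.cos (6 * π * x) / (Real.exp (2 * π * Real.sqrt x) - 1)) =
      (13 - 4 * Real.sqrt 3) / 144 := by
  simpa only [Nat.cast_ofNat, ramanujan_value_six] using
    ramanujan_RC_zero_six_general (n := 6) (by decide) (by decide)
end
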